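/- arXiv:2501.10558 — 3 statements merged into one kernel-verified Lean document; each statement's English description precedes it below -/
import Mathlib

section
/- Let (𝓛, 𝒬) be a line combinatorics. Let MH be the quotient of the free abelian group on the set 𝓛 ⊔ 𝒬^{>2} by the subgroup generated by the elements (1 − b(L))·L + Σ_{P ∈ 𝒬^{>2}, L ∈ P} P + Σ_{L' ∈ 𝓛, L' ≠ L, |L ∩ L'|-point has 2 elements} L' for every line L ∈ 𝓛 (the sum over L' being over lines meeting L at a two-element point), and (−1)·P + Σ_{L ∈ P} L for every P ∈ 𝒬^{>2}. Then MH is isomorphic to the quotient of the free abelian group on 𝓛 by the subgroup generated by the single element Σ_{L ∈ 𝓛} L, via the homomorphism sending the class of each generator L ∈ 𝓛 to the class of L and the class of each generator P ∈ 𝒬^{>2} to the class of Σ_{L ∈ P} L. -/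
/-!
The point relator `-P + Σ_{L ∈ P} L` says exactly that the generator `P` is redundant, so `MH` is the
quotient of the free abelian group on the lines by the images of the line relators under the
substitution `P ↦ Σ_{L ∈ P} L` (`pointElim`). The key fact, `pointElim_relLine`, is that each line
relator becomes `Σ_{M} M`, whatever the line `L`: a line `M ≠ L` meets `L` in exactly one point, so it
occurs once, through a point of multiplicity at least `3` or through a double point, while `L` itself
occurs `(1 - b(L)) + b(L) = 1` times. The inverse isomorphism is induced by the inclusion of the lines
among the vertices. When there are no lines there is no line relator, but then `Σ_M M = 0`.
-/

namespace MeridianHomology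

variable {𝓛 : Type*} [Fintype 𝓛] [DecidableEq 𝓛]

/-- The points of multiplicity `> 2` of the combinatorics, i.e. the set `𝒬^{>2}`. -/
abbrev Q2 (𝒬 : Finset (Finset 𝓛)) : Type _ := {P : Finset 𝓛 // P ∈ 𝒬 ∧ 3 ≤ P.card}

/-- The free abelian group on the vertex set `𝓛 ⊔ 𝒬^{>2}` of the reduced
incidence graph. -/
abbrev C0 (𝒬 : Finset (Finset 𝓛)) : Type _ := (𝓛 ⊕ Q2 𝒬) →₀ ℤ

/-- `b(L)`: the number of points of `𝒬^{>2}` containing the line `L`. -/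
def bL (𝒬 : Finset (Finset 𝓛)) (L : 𝓛) : ℕ := (𝒬.filter fun P => 3 ≤ P.card ∧ L ∈ P).card

open Finsupp in
/-- The relator attached to a line `L`:
`(1 − b(L))·L + Σ_{P ∈ 𝒬^{>2}, L ∈ P} P + Σ_{L' ≠ L meeting L at a double point} L'`. -/
noncomputable def relLine (𝒬 : Finset (Finset 𝓛)) (L : 𝓛) : C0 𝒬 :=
  Finsupp.single (Sum.inl L) (1 - (bL 𝒬 L : ℤ)) +
    ∑ P ∈ Finset.univ.filter (fun P : Q2 𝒬 => L ∈ P.1), Finsupp.single (Sum.inr P) 1 +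
    ∑ L' ∈ Finset.univ.filter
        (fun L' : 𝓛 => L' ≠ L ∧ ∃ P ∈ 𝒬, L ∈ P ∧ L' ∈ P ∧ P.card = 2),
      Finsupp.single (Sum.inl L') 1

/-- The relator attached to a point `P ∈ 𝒬^{>2}`: `(−1)·P + Σ_{L ∈ P} L`. -/
noncomputable def relPoint (𝒬 : Finset (Finset 𝓛)) (P : Q2 𝒬) : C0 𝒬 :=
  Finsupp.single (Sum.inr P) (-1) + ∑ L ∈ P.1, Finsupp.single (Sum.inl L) 1

/-- The meridian homology `MH` of the reduced incidence graph of the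
combinatorics: the quotient of the free abelian group on `𝓛 ⊔ 𝒬^{>2}` by the
subgroup generated by the relators. -/
abbrev MH (𝒬 : Finset (Finset 𝓛)) : Type _ :=
  C0 𝒬 ⧸ AddSubgroup.closure
    ({x | ∃ L : 𝓛, x = relLine 𝒬 L} ∪ {x | ∃ P : Q2 𝒬, x = relPoint 𝒬 P})

/-- The quotient of the free abelian group on `𝓛` by the subgroup generated by the
single element `Σ_{L ∈ 𝓛} L`. -/
abbrev MH' (𝓛 : Type*) [Fintype 𝓛] : Type _ :=
  (𝓛 →₀ ℤ) ⧸ AddSubgroup.closure {∑ L : 𝓛, Finsupp.single L (1 : ℤ)}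

end MeridianHomology

namespace MeridianHomology

variable {𝓛 : Type*}

/-- The substitution eliminating the point generators: `L ↦ L` and `P ↦ Σ_{L ∈ P} L`. -/
noncomputable def pointElim (𝒬 : Finset (Finset 𝓛)) : C0 𝒬 →+ (𝓛 →₀ ℤ) :=
  Finsupp.liftAddHom (Sum.elim (fun L => Finsupp.singleAddHom L)
    (fun P => ∑ L ∈ P.1, Finsupp.singleAddHom L))

/-- The inclusion of the free abelian group on the lines into that on all vertices. -/
noncomputable def lineIncl (𝒬 : Finset (Finset 𝓛)) : (𝓛 →₀ ℤ) →+ C0 𝒬 :=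
  Finsupp.mapDomain.addMonoidHom Sum.inl

@[simp] lemma pointElim_inl (𝒬 : Finset (Finset 𝓛)) (L : 𝓛) (n : ℤ) :
    pointElim 𝒬 (Finsupp.single (Sum.inl L) n) = Finsupp.single L n := by
  simp [pointElim]

@[simp] lemma pointElim_inr (𝒬 : Finset (Finset 𝓛)) (P : Q2 𝒬) (n : ℤ) :
    pointElim 𝒬 (Finsupp.single (Sum.inr P) n) = ∑ L ∈ P.1, Finsupp.single L n := by
  simp [pointElim, AddMonoidHom.finsetSum_apply]

@[simp] lemma lineIncl_single (𝒬 : Finset (Finset 𝓛)) (L : 𝓛) (n : ℤ) :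
    lineIncl 𝒬 (Finsupp.single L n) = Finsupp.single (Sum.inl L) n := by
  simp [lineIncl, Finsupp.mapDomain_single]

lemma pointElim_lineIncl (𝒬 : Finset (Finset 𝓛)) (x : 𝓛 →₀ ℤ) :
    pointElim 𝒬 (lineIncl 𝒬 x) = x := by
  induction x using Finsupp.induction_linear with
  | zero => simp
  | add f g hf hg => rw [map_add, map_add, hf, hg]
  | single L n => simp

lemma pointElim_relPoint (𝒬 : Finset (Finset 𝓛)) (P : Q2 𝒬) :
    pointElim 𝒬 (relPoint 𝒬 P) = 0 := by
  simp [relPoint, map_sum]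

variable [Fintype 𝓛] [DecidableEq 𝓛]

lemma card_filter_Q2 (𝒬 : Finset (Finset 𝓛)) (p : Finset 𝓛 → Prop) [DecidablePred p] :
    (Finset.univ.filter (fun P : Q2 𝒬 => p P.1)).card =
      (𝒬.filter fun P => 3 ≤ P.card ∧ p P).card := by
  refine Finset.card_bij (fun P _ => P.1) ?_ ?_ ?_
  · intro P hP
    simpa [P.2.1, P.2.2] using hP
  · intro P _ R _ h
    exact Subtype.ext h
  · intro P hP
    simp only [Finset.mem_filter] at hP
    exact ⟨⟨P, hP.1, hP.2.1⟩, by simpa using hP.2.2, rfl⟩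

/-- Eliminating the points from the relator of any line gives the sum of all lines, because every
other line meets `L` in exactly one point. -/
lemma pointElim_relLine (𝒬 : Finset (Finset 𝓛)) (h2 : ∀ P ∈ 𝒬, 2 ≤ P.card)
    (huniq : ∀ L L' : 𝓛, L ≠ L' → ∃! P, P ∈ 𝒬 ∧ L ∈ P ∧ L' ∈ P) (L : 𝓛) :
    pointElim 𝒬 (relLine 𝒬 L) = ∑ M : 𝓛, Finsupp.single M (1 : ℤ) := by
  ext M
  -- The contribution of the multiple points counts those through both `L` and `M`.
  have hpts : (∑ P ∈ Finset.univ.filter (fun P : Q2 𝒬 => L ∈ P.1),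
      ∑ L' ∈ P.1, (Finsupp.single L' (1 : ℤ)) M) =
      ((𝒬.filter fun P => 3 ≤ P.card ∧ L ∈ P ∧ M ∈ P).card : ℤ) := by
    rw [← card_filter_Q2 𝒬 (fun P => L ∈ P ∧ M ∈ P), ← Finset.filter_filter, Finset.card_filter]
    push_cast
    refine Finset.sum_congr rfl fun P _ => ?_
    simp [Finsupp.single_apply]
  have hdbl : (∑ L' ∈ Finset.univ.filter
        (fun L' : 𝓛 => L' ≠ L ∧ ∃ P ∈ 𝒬, L ∈ P ∧ L' ∈ P ∧ P.card = 2),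
      (Finsupp.single L' (1 : ℤ)) M) =
      if M ≠ L ∧ ∃ P ∈ 𝒬, L ∈ P ∧ M ∈ P ∧ P.card = 2 then 1 else 0 := by
    simp [Finsupp.single_apply]
  have hall : (∑ L' : 𝓛, (Finsupp.single L' (1 : ℤ)) M) = 1 := by
    simp [Finsupp.single_apply]
  simp only [relLine, map_add, map_sum, pointElim_inl, pointElim_inr, Finsupp.add_apply,
    Finsupp.finsetSum_apply]
  rw [hpts, hdbl, hall]
  by_cases hML : M = L
  · subst hML
    simp [bL]
  · obtain ⟨P, ⟨hP, hLP, hMP⟩, hu⟩ := huniq L M (Ne.symm hML)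
    rw [Finsupp.single_eq_of_ne hML]
    by_cases h3 : 3 ≤ P.card
    · have hf : (𝒬.filter fun R => 3 ≤ R.card ∧ L ∈ R ∧ M ∈ R) = {P} := by
        ext R
        simp only [Finset.mem_filter, Finset.mem_singleton]
        constructor
        · rintro ⟨a, _, b, c⟩
          exact hu R ⟨a, b, c⟩
        · rintro rfl
          exact ⟨hP, h3, hLP, hMP⟩
      rw [hf, if_neg]
      · simp
      · rintro ⟨_, R, a, b, c, d⟩
        rw [hu R ⟨a, b, c⟩] at d
        omega
    · have hf : (𝒬.filter fun R => 3 ≤ R.card ∧ L ∈ R ∧ M ∈ R) = ∅ := by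
        refine Finset.filter_eq_empty_iff.2 ?_
        rintro R a ⟨d, b, c⟩
        rw [hu R ⟨a, b, c⟩] at d
        exact h3 d
      rw [hf, if_pos ⟨hML, P, hP, hLP, hMP, by have := h2 P hP; omega⟩]
      simp

/-- The subgroup of relations defining `MH`. -/
noncomputable abbrev relSubgroup (𝒬 : Finset (Finset 𝓛)) : AddSubgroup (C0 𝒬) :=
  AddSubgroup.closure
    ({x | ∃ L : 𝓛, x = relLine 𝒬 L} ∪ {x | ∃ P : Q2 𝒬, x = relPoint 𝒬 P})

/-- The point relators identify every element with the one obtained by eliminating its points. -/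
lemma lineIncl_pointElim_sub_mem (𝒬 : Finset (Finset 𝓛)) (x : C0 𝒬) :
    lineIncl 𝒬 (pointElim 𝒬 x) - x ∈ relSubgroup 𝒬 := by
  induction x using Finsupp.induction_linear with
  | zero => simp
  | add f g hf hg =>
    rw [map_add, map_add, add_sub_add_comm]
    exact add_mem hf hg
  | single v n =>
    rcases v with L | P
    · simp
    · have h : lineIncl 𝒬 (pointElim 𝒬 (Finsupp.single (Sum.inr P) n)) -
          Finsupp.single (Sum.inr P) n = n • relPoint 𝒬 P := by
        simp [relPoint, map_sum, smul_add, Finset.smul_sum, Finsupp.smul_single, sub_eq_add_neg,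
          add_comm]
      have hP : relPoint 𝒬 P ∈ relSubgroup 𝒬 := AddSubgroup.subset_closure (Or.inr ⟨P, rfl⟩)
      rw [h]
      exact zsmul_mem hP n

lemma relSubgroup_le_comap (𝒬 : Finset (Finset 𝓛)) (h2 : ∀ P ∈ 𝒬, 2 ≤ P.card)
    (huniq : ∀ L L' : 𝓛, L ≠ L' → ∃! P, P ∈ 𝒬 ∧ L ∈ P ∧ L' ∈ P) :
    relSubgroup 𝒬 ≤
      (AddSubgroup.closure {∑ L : 𝓛, Finsupp.single L (1 : ℤ)}).comap (pointElim 𝒬) := by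
  refine (AddSubgroup.closure_le _).2 ?_
  rintro x (⟨L, rfl⟩ | ⟨P, rfl⟩)
  · simp only [AddSubgroup.coe_comap, Set.mem_preimage, pointElim_relLine 𝒬 h2 huniq]
    exact AddSubgroup.subset_closure rfl
  · simp only [AddSubgroup.coe_comap, Set.mem_preimage, pointElim_relPoint]
    exact zero_mem _

lemma closure_sum_le_comap (𝒬 : Finset (Finset 𝓛)) (h2 : ∀ P ∈ 𝒬, 2 ≤ P.card)
    (huniq : ∀ L L' : 𝓛, L ≠ L' → ∃! P, P ∈ 𝒬 ∧ L ∈ P ∧ L' ∈ P) :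
    AddSubgroup.closure {∑ L : 𝓛, Finsupp.single L (1 : ℤ)} ≤
      (relSubgroup 𝒬).comap (lineIncl 𝒬) := by
  refine (AddSubgroup.closure_le _).2 (Set.singleton_subset_iff.2 ?_)
  rw [SetLike.mem_coe, AddSubgroup.mem_comap]
  rcases isEmpty_or_nonempty 𝓛 with h | ⟨⟨L⟩⟩
  · simp
  · rw [← pointElim_relLine 𝒬 h2 huniq L]
    have hL : relLine 𝒬 L ∈ relSubgroup 𝒬 := AddSubgroup.subset_closure (Or.inl ⟨L, rfl⟩)
    have h := add_mem (lineIncl_pointElim_sub_mem 𝒬 (relLine 𝒬 L)) hL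
    rwa [sub_add_cancel] at h

end MeridianHomology

open MeridianHomology in
/-- The meridian homology of the reduced incidence graph of a line combinatorics is
isomorphic to the quotient of the free abelian group on the lines by `Σ_L L`, via the
homomorphism sending (the class of) a line generator `L` to the class of `L` and (the
class of) a point generator `P` to the class of `Σ_{L ∈ P} L`. -/
theorem meridian_homology_iso {𝓛 : Type*} [Fintype 𝓛] [DecidableEq 𝓛]
    (𝒬 : Finset (Finset 𝓛))
    (h2 : ∀ P ∈ 𝒬, 2 ≤ P.card)
    (huniq : ∀ L L' : 𝓛, L ≠ L' → ∃! P, P ∈ 𝒬 ∧ L ∈ P ∧ L' ∈ P) :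
    ∃ e : MH 𝒬 ≃+ MH' 𝓛,
      (∀ L : 𝓛, e (QuotientAddGroup.mk (Finsupp.single (Sum.inl L) 1)) =
        QuotientAddGroup.mk (Finsupp.single L 1)) ∧
      (∀ P : Q2 𝒬, e (QuotientAddGroup.mk (Finsupp.single (Sum.inr P) 1)) =
        QuotientAddGroup.mk (∑ L ∈ P.1, Finsupp.single L 1)) := by
  refine ⟨AddMonoidHom.toAddEquiv
    (QuotientAddGroup.map _ _ (pointElim 𝒬) (relSubgroup_le_comap 𝒬 h2 huniq))
    (QuotientAddGroup.map _ _ (lineIncl 𝒬) (closure_sum_le_comap 𝒬 h2 huniq)) ?_ ?_, ?_, ?_⟩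
  · refine QuotientAddGroup.addMonoidHom_ext _ (AddMonoidHom.ext fun x => ?_)
    refine (QuotientAddGroup.eq_iff_sub_mem (N := relSubgroup 𝒬)).2 ?_
    exact lineIncl_pointElim_sub_mem 𝒬 x
  · refine QuotientAddGroup.addMonoidHom_ext _ (AddMonoidHom.ext fun x => ?_)
    exact congrArg QuotientAddGroup.mk (pointElim_lineIncl 𝒬 x)
  · intro L
    exact congrArg QuotientAddGroup.mk (pointElim_inl 𝒬 L 1)
  · intro P
    exact congrArg QuotientAddGroup.mk (pointElim_inr 𝒬 P 1)
end

section
/- Let (𝓛, 𝒬) be a line combinatorics. Consider its reduced incidence graph Γ (vertices 𝓛 ∪ 𝒬^{>2}; an edge between L and P ∈ 𝒬^{>2} whenever L ∈ P, and an edge between distinct lines L, L' whenever the unique point containing both has exactly 2 elements), decorated with Euler numbers ε_L = 1 − b(L) for lines and ε_P = −1 for P ∈ 𝒬^{>2}; and its full incidence graph Γ̂ (vertices 𝓛 ⊔ 𝒬, an edge between L and P whenever L ∈ P), decorated with Euler numbers ε_L = 1 − n(L) for lines and ε_P = −1 for all P ∈ 𝒬. For each graph, fix an arbitrary orientation of the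 edges and form the graph stabiliser 𝒢: the quotient of Hom(H₁, MH) by the submodule generated by the images, under the map Hom(C₁, C₀) → Hom(H₁, MH) given by restricting to H₁ ⊆ C₁ and composing with the projection C₀ → MH, of the homomorphisms (GS1) e ↦ v and e ↦ x (all other edges ↦ 0), for every edge e with endpoints v, x, and (GS2) e_{v,y} ↦ z, e_{v,z} ↦ δ_{v,y}δ_{v,z}·y (all other edges ↦ 0), for every pair of edges e_{v,y}, e_{v,z} sharing the vertex v, where δ_{v,w} = +1 if the edge is oriented from v to w and −1 otherwise. Then the graph stabiliser of the reduced incidence graph Γ and the graph stabiliser of the full incidence graph Γ̂ are isomorphic as abelian groups. -/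
/-!
The full incidence graph `Γ̂` is obtained from the reduced one `Γ` by subdividing the line-line
edge of every double point `P = {L, L'}` with a new vertex `P` of Euler number `-1`; the extra
incidences at `P` lower the Euler numbers of `L` and `L'` by one. This changes neither side of
`Hom(H₁, MH)`.

* On chains, `subdiv` sends a reduced edge to the path of full edges subdividing it. It is
  injective and detects cycles (`subdiv_mem_H1`), and every cycle of `Γ̂` is a subdivision, because
  the vanishing of its boundary at `P` makes the two halves carry the same flow (`flow_eq`,
  `subdiv_unsubdiv`).
* On vertices, the relation at a double point reads `P = L + L'` in `MH(Γ̂)`. The map `collapse`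
  imposes this; it carries the relation at `L` in `Γ̂` to the one at `L` in `Γ`, which is where
  `n(L) = b(L) + #{double points on L}` enters (`collapse_vrel_inl`, `nL_bL`). So `collapse` and the
  inclusion `embC0` are inverse to each other on `MH`.

The relations match as well (`red_to_full`, `full_to_red`). Multiplying (GS2) by the sign of its
first edge makes it symmetric and independent of orientations: with `f(e, v)` the coefficient of
`e` counted outwards from `v`, it reads `f(e₁, v) ⊗ z + f(e₂, v) ⊗ y` (lemma `gs2`), and the flows
`f` of the two graphs correspond under `subdiv`. For a double point, (GS1) for the halves of a
subdivided edge gives `L`, `L'` and `P = L + L'`, which is (GS1) for the edge `LL'`. In (GS2) at a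
line `L`, replacing the neighbour `L'` by `P = L + L'` changes the relation by a multiple of
`e ↦ L`, which is in (GS1); and (GS2) at the vertex `P` itself follows from (GS1). The
isomorphism is then formal (`stab_equiv`).
-/

namespace GraphStabiliser

/-! ### The graph stabiliser of a finite oriented decorated graph

A finite graph is given by a vertex type `V`, an edge type `E` and, for each edge,
its tail `t e` and head `h e` (this choice of tail/head is the orientation);
`eul : V → ℤ` are the Euler-number decorations. -/

variable (V E : Type*) [Fintype V] [Fintype E] [DecidableEq V] [DecidableEq E]

/-- The boundary map `∂ : C₁ → C₀`, sending each oriented edge to head minus tail. -/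
noncomputable def bdry (t h : E → V) : (E →₀ ℤ) →ₗ[ℤ] (V →₀ ℤ) :=
  Finsupp.linearCombination ℤ fun e => Finsupp.single (h e) 1 - Finsupp.single (t e) 1

/-- The first homology `H₁ = ker ∂` of the graph. -/
noncomputable def H1 (t h : E → V) : Submodule ℤ (E →₀ ℤ) := LinearMap.ker (bdry V E t h)

/-- The submodule of meridian relations: generated by the elements
`ε_v·v + Σ_{w neighbour of v} w` for all vertices `v` (the neighbour sum is taken
over all edges incident to `v`, contributing their other endpoint). -/
noncomputable def mhRel (t h : E → V) (eul : V → ℤ) : Submodule ℤ (V →₀ ℤ) :=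
  Submodule.span ℤ
    {x | ∃ v : V, x = Finsupp.single v (eul v) +
      ∑ e : E, ((if t e = v then Finsupp.single (h e) (1 : ℤ) else 0) +
                (if h e = v then Finsupp.single (t e) (1 : ℤ) else 0))}

/-- The meridian homology `MH` of the decorated graph. -/
abbrev MH (t h : E → V) (eul : V → ℤ) : Type _ := (V →₀ ℤ) ⧸ mhRel V E t h eul

/-- The map `Hom(C₁, C₀) → Hom(H₁, MH)` obtained by restricting to `H₁ ⊆ C₁` and
composing with the projection `C₀ → MH`. -/
noncomputable def Phi (t h : E → V) (eul : V → ℤ) :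
    ((E →₀ ℤ) →ₗ[ℤ] (V →₀ ℤ)) → (H1 V E t h →ₗ[ℤ] MH V E t h eul) := fun f =>
  (mhRel V E t h eul).mkQ ∘ₗ f ∘ₗ (H1 V E t h).subtype

/-- The homomorphism `C₁ → C₀` sending the basis edge `e` to `y ∈ C₀` and every other
edge to `0`. -/
noncomputable def basisHom (e : E) (y : V →₀ ℤ) : (E →₀ ℤ) →ₗ[ℤ] (V →₀ ℤ) :=
  Finsupp.linearCombination ℤ fun e' => if e' = e then y else 0

/-- The endpoint of the edge `e` other than `v` (for `v` an endpoint of `e`). -/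
def other (t h : E → V) (e : E) (v : V) : V := if t e = v then h e else t e

/-- The sign `δ_{v,·}` of the edge `e` at its endpoint `v`: `+1` if `e` is oriented away
from `v` and `−1` otherwise. -/
def sgn (t : E → V) (e : E) (v : V) : ℤ := if t e = v then 1 else -1

/-- The generators (GS1) and (GS2) of the relations of the graph stabiliser, as
elements of `Hom(C₁, C₀)`:
(GS1) `e ↦ v` and `e ↦ x` for every edge `e` with endpoints `v`, `x`;
(GS2) `e₁ ↦ z, e₂ ↦ δ₁δ₂·y` for every pair of edges `e₁` (other endpoint `y`) and
`e₂` (other endpoint `z`) sharing a vertex `v`, where `δᵢ` is the sign of `eᵢ` at `v`. -/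
noncomputable def gsGens (t h : E → V) : Set ((E →₀ ℤ) →ₗ[ℤ] (V →₀ ℤ)) :=
  {f | ∃ e : E, f = basisHom V E e (Finsupp.single (t e) 1) ∨
                f = basisHom V E e (Finsupp.single (h e) 1)} ∪
  {f | ∃ (e₁ e₂ : E) (v : V), (t e₁ = v ∨ h e₁ = v) ∧ (t e₂ = v ∨ h e₂ = v) ∧
    f = basisHom V E e₁ (Finsupp.single (other V E t h e₂ v) 1) +
        (sgn V E t e₁ v * sgn V E t e₂ v) •
          basisHom V E e₂ (Finsupp.single (other V E t h e₁ v) 1)}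

/-- The graph stabiliser of the finite oriented decorated graph: the quotient of
`Hom(H₁, MH)` by the submodule generated by the images under `Phi` of the
generators (GS1) and (GS2). -/
abbrev Stab (t h : E → V) (eul : V → ℤ) : Type _ :=
  (H1 V E t h →ₗ[ℤ] MH V E t h eul) ⧸
    Submodule.span ℤ (Phi V E t h eul '' gsGens V E t h)

end GraphStabiliser

namespace GraphStabiliser

/-! ### The reduced and full incidence graphs of a line combinatorics -/

variable {𝓛 : Type*} [Fintype 𝓛] [DecidableEq 𝓛]

/-- The points of the combinatorics. -/
abbrev Pts (𝒬 : Finset (Finset 𝓛)) : Type _ := {P : Finset 𝓛 // P ∈ 𝒬}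

/-- The points of multiplicity `> 2`. -/
abbrev Pts2 (𝒬 : Finset (Finset 𝓛)) : Type _ := {P : Finset 𝓛 // P ∈ 𝒬 ∧ 3 ≤ P.card}

/-- The edges of the full incidence graph: pairs `(P, L)` with `L ∈ P ∈ 𝒬`. -/
abbrev FullE (𝒬 : Finset (Finset 𝓛)) : Type _ :=
  {pl : Finset 𝓛 × 𝓛 // pl.1 ∈ 𝒬 ∧ pl.2 ∈ pl.1}

/-- The point-line edges of the reduced incidence graph: pairs `(P, L)` with
`L ∈ P ∈ 𝒬^{>2}`. -/
abbrev RedE1 (𝒬 : Finset (Finset 𝓛)) : Type _ :=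
  {pl : Finset 𝓛 × 𝓛 // pl.1 ∈ 𝒬 ∧ 3 ≤ pl.1.card ∧ pl.2 ∈ pl.1}

/-- The line-line edges of the reduced incidence graph: double points (which are
exactly the two-element members of `𝒬`). -/
abbrev RedE2 (𝒬 : Finset (Finset 𝓛)) : Type _ := {P : Finset 𝓛 // P ∈ 𝒬 ∧ P.card = 2}

/-- `n(L)`: the number of points of `𝒬` containing `L`. -/
def nL (𝒬 : Finset (Finset 𝓛)) (L : 𝓛) : ℕ := (𝒬.filter fun P => L ∈ P).card

/-- `b(L)`: the number of points of `𝒬^{>2}` containing `L`. -/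
def bL (𝒬 : Finset (Finset 𝓛)) (L : 𝓛) : ℕ := (𝒬.filter fun P => 3 ≤ P.card ∧ L ∈ P).card

/-- The Euler decorations of the full incidence graph: `1 − n(L)` on lines, `−1` on
points. -/
def eulFull (𝒬 : Finset (Finset 𝓛)) : 𝓛 ⊕ Pts 𝒬 → ℤ :=
  Sum.elim (fun L => 1 - (nL 𝒬 L : ℤ)) fun _ => -1

/-- The Euler decorations of the reduced incidence graph: `1 − b(L)` on lines, `−1` on
points of multiplicity `> 2`. -/
def eulRed (𝒬 : Finset (Finset 𝓛)) : 𝓛 ⊕ Pts2 𝒬 → ℤ :=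
  Sum.elim (fun L => 1 - (bL 𝒬 L : ℤ)) fun _ => -1

end GraphStabiliser

set_option linter.unusedSectionVars false

namespace GraphStabiliser

/-! ### Graph stabilisers of general graphs -/

section General

variable {V E : Type*} [Fintype V] [Fintype E] [DecidableEq V] [DecidableEq E]

/-- The edge `e` is incident to the vertex `v`. -/
abbrev Inc (t h : E → V) (e : E) (v : V) : Prop := t e = v ∨ h e = v

/-- The generating meridian relation at the vertex `v`. -/
noncomputable def vrel (t h : E → V) (eul : V → ℤ) (v : V) : V →₀ ℤ :=
  Finsupp.single v (eul v) +
      ∑ e : E, ((if t e = v then Finsupp.single (h e) (1 : ℤ) else 0) +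
                (if h e = v then Finsupp.single (t e) (1 : ℤ) else 0))

lemma vrel_mem (t h : E → V) (eul : V → ℤ) (v : V) : vrel t h eul v ∈ mhRel V E t h eul :=
  Submodule.subset_span ⟨v, rfl⟩

lemma mhRel_le_comap {M : Type*} [AddCommGroup M] (t h : E → V) (eul : V → ℤ)
    (f : (V →₀ ℤ) →ₗ[ℤ] M) (N : Submodule ℤ M) (H : ∀ v, f (vrel t h eul v) ∈ N) :
    mhRel V E t h eul ≤ N.comap f := by
  refine Submodule.span_le.2 ?_
  rintro _ ⟨v, rfl⟩
  exact H v

lemma vrel_eq (t h : E → V) (hl : ∀ e, t e ≠ h e) (eul : V → ℤ) (v : V) :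
    vrel t h eul v = eul v • Finsupp.single v (1 : ℤ) +
      ∑ e : E, if Inc t h e v then Finsupp.single (other V E t h e v) (1 : ℤ) else 0 := by
  unfold vrel other
  congr 1
  · simp
  · refine Finset.sum_congr rfl fun e _ => ?_
    have := hl e
    by_cases h1 : t e = v <;> by_cases h2 : h e = v <;> simp [h1, h2]
    exact absurd (h1.trans h2.symm) this

lemma bdry_apply (t h : E → V) (hl : ∀ e, t e ≠ h e) (x : E →₀ ℤ) (v : V) :
    bdry V E t h x v = -∑ e : E, if Inc t h e v then sgn V E t e v * x e else 0 := by
  unfold bdry sgn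
  rw [Finsupp.linearCombination_apply, Finsupp.sum_fintype _ _ (by simp), Finsupp.finsetSum_apply,
    ← Finset.sum_neg_distrib]
  refine Finset.sum_congr rfl fun e _ => ?_
  have := hl e
  by_cases h1 : t e = v <;> by_cases h2 : h e = v <;> simp [h1, h2, Inc]
  exact absurd (h1.trans h2.symm) this

@[simp] lemma basisHom_apply (e : E) (y : V →₀ ℤ) (x : E →₀ ℤ) :
    basisHom V E e y x = x e • y := by
  unfold basisHom
  rw [Finsupp.linearCombination_apply, Finsupp.sum_fintype _ _ (by simp)]
  simp

lemma sgn_mul_self (t : E → V) (e : E) (v : V) : sgn V E t e v * sgn V E t e v = 1 := by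
  unfold sgn; split <;> simp

/-- The homomorphisms `C₁ → C₀` whose image under `Phi` vanishes in the graph stabiliser. -/
noncomputable def rel (t h : E → V) (eul : V → ℤ) :
    Submodule ℤ ((E →₀ ℤ) →ₗ[ℤ] (V →₀ ℤ)) :=
  (Submodule.span ℤ (Phi V E t h eul '' gsGens V E t h)).comap
    ({ toFun := Phi V E t h eul
       map_add' := fun f g => by ext; simp [Phi]
       map_smul' := fun c f => by ext; simp [Phi] } :
      ((E →₀ ℤ) →ₗ[ℤ] (V →₀ ℤ)) →ₗ[ℤ] (H1 V E t h →ₗ[ℤ] MH V E t h eul))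

lemma mem_rel (t h : E → V) (eul : V → ℤ) (f : (E →₀ ℤ) →ₗ[ℤ] (V →₀ ℤ)) :
    f ∈ rel t h eul ↔
      Phi V E t h eul f ∈ Submodule.span ℤ (Phi V E t h eul '' gsGens V E t h) := Iff.rfl

/-- Membership in `rel` only depends on the values on cycles, modulo the meridian relations. -/
lemma rel_congr {t h : E → V} {eul : V → ℤ} {f g : (E →₀ ℤ) →ₗ[ℤ] (V →₀ ℤ)}
    (hg : g ∈ rel t h eul) (H : ∀ x ∈ H1 V E t h, f x - g x ∈ mhRel V E t h eul) :
    f ∈ rel t h eul := by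
  rw [mem_rel] at *
  convert hg using 1
  ext x
  exact (Submodule.Quotient.eq _).2 (H x.1 x.2)

lemma gen_mem_rel {t h : E → V} (eul : V → ℤ) {f : (E →₀ ℤ) →ₗ[ℤ] (V →₀ ℤ)}
    (hf : f ∈ gsGens V E t h) : f ∈ rel t h eul :=
  Submodule.subset_span ⟨f, hf, rfl⟩

lemma gs1 {t h : E → V} (eul : V → ℤ) {e : E} {v : V} (hv : Inc t h e v) :
    basisHom V E e (Finsupp.single v 1) ∈ rel t h eul := by
  apply gen_mem_rel
  rcases hv with rfl | rfl
  · exact Or.inl ⟨e, Or.inl rfl⟩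
  · exact Or.inl ⟨e, Or.inr rfl⟩

/-- The relation (GS2), normalised so that it is symmetric in the two edges and independent of
the orientation: both coefficients are counted outwards from the common vertex `v`. -/
lemma gs2 {t h : E → V} (eul : V → ℤ) {e₁ e₂ : E} {v : V} (h₁ : Inc t h e₁ v)
    (h₂ : Inc t h e₂ v) :
    sgn V E t e₁ v • basisHom V E e₁ (Finsupp.single (other V E t h e₂ v) 1) +
      sgn V E t e₂ v • basisHom V E e₂ (Finsupp.single (other V E t h e₁ v) 1) ∈
        rel t h eul := by
  have := (rel t h eul).smul_mem (sgn V E t e₁ v)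
    (gen_mem_rel eul (t := t) (h := h) (Or.inr ⟨e₁, e₂, v, h₁, h₂, rfl⟩))
  rwa [smul_add, smul_smul, ← mul_assoc, sgn_mul_self, one_mul] at this

/-- Up to scalars, every generator is an instance of (GS1) or of (GS2) in the normalised form of
`gs2`. -/
lemma gsGens_induct {t h : E → V} {p : ((E →₀ ℤ) →ₗ[ℤ] (V →₀ ℤ)) → Prop}
    (hsmul : ∀ (c : ℤ) f, p f → p (c • f))
    (h1 : ∀ e v, Inc t h e v → p (basisHom V E e (Finsupp.single v 1)))
    (h2 : ∀ e₁ e₂ v, Inc t h e₁ v → Inc t h e₂ v →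
      p (sgn V E t e₁ v • basisHom V E e₁ (Finsupp.single (other V E t h e₂ v) 1) +
      sgn V E t e₂ v • basisHom V E e₂ (Finsupp.single (other V E t h e₁ v) 1)))
    {f : (E →₀ ℤ) →ₗ[ℤ] (V →₀ ℤ)} (hf : f ∈ gsGens V E t h) : p f := by
  rcases hf with ⟨e, rfl | rfl⟩ | ⟨e₁, e₂, v, i₁, i₂, rfl⟩
  · exact h1 _ _ (Or.inl rfl)
  · exact h1 _ _ (Or.inr rfl)
  · have := hsmul (sgn V E t e₁ v) _ (h2 e₁ e₂ v i₁ i₂)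
    rwa [smul_add, smul_smul, smul_smul, sgn_mul_self, one_smul] at this

end General

/-! ### Transferring graph stabilisers along chain maps -/

section Transfer

variable {V E V' E' : Type*} [Fintype V] [Fintype E] [DecidableEq V] [DecidableEq E]
  [Fintype V'] [Fintype E'] [DecidableEq V'] [DecidableEq E']
  {t h : E → V} {eul : V → ℤ} {t' h' : E' → V'} {eul' : V' → ℤ}

/-- The map `Hom(H₁, MH) → Hom(H₁', MH')` induced by maps `C₁' → C₁` and `C₀ → C₀'` that preserve
cycles and meridian relations respectively. -/
noncomputable def conj (B : (E' →₀ ℤ) →ₗ[ℤ] (E →₀ ℤ)) (I : (V →₀ ℤ) →ₗ[ℤ] (V' →₀ ℤ))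
    (hB : ∀ x ∈ H1 V' E' t' h', B x ∈ H1 V E t h)
    (hI : mhRel V E t h eul ≤ (mhRel V' E' t' h' eul').comap I) :
    (H1 V E t h →ₗ[ℤ] MH V E t h eul) →ₗ[ℤ] (H1 V' E' t' h' →ₗ[ℤ] MH V' E' t' h' eul') where
  toFun f := (Submodule.mapQ _ _ I hI) ∘ₗ f ∘ₗ B.restrict hB
  map_add' f g := by ext; simp
  map_smul' c f := by ext; simp

lemma conj_Phi (B : (E' →₀ ℤ) →ₗ[ℤ] (E →₀ ℤ)) (I : (V →₀ ℤ) →ₗ[ℤ] (V' →₀ ℤ))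
    (hB : ∀ x ∈ H1 V' E' t' h', B x ∈ H1 V E t h)
    (hI : mhRel V E t h eul ≤ (mhRel V' E' t' h' eul').comap I)
    (f : (E →₀ ℤ) →ₗ[ℤ] (V →₀ ℤ)) :
    conj B I hB hI (Phi V E t h eul f) = Phi V' E' t' h' eul' (I ∘ₗ f ∘ₗ B) := by
  ext x
  simp [conj, Phi]

lemma conj_le (B : (E' →₀ ℤ) →ₗ[ℤ] (E →₀ ℤ)) (I : (V →₀ ℤ) →ₗ[ℤ] (V' →₀ ℤ))
    (hB : ∀ x ∈ H1 V' E' t' h', B x ∈ H1 V E t h)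
    (hI : mhRel V E t h eul ≤ (mhRel V' E' t' h' eul').comap I)
    (hg : ∀ f ∈ gsGens V E t h, I ∘ₗ f ∘ₗ B ∈ rel t' h' eul') :
    Submodule.span ℤ (Phi V E t h eul '' gsGens V E t h) ≤
      (Submodule.span ℤ (Phi V' E' t' h' eul' '' gsGens V' E' t' h')).comap
        (conj B I hB hI) := by
  refine Submodule.span_le.2 ?_
  rintro _ ⟨f, hf, rfl⟩
  have := hg f hf
  rw [mem_rel, ← conj_Phi B I hB hI] at this
  exact this

lemma conj_conj (A : (E →₀ ℤ) →ₗ[ℤ] (E' →₀ ℤ)) (B : (E' →₀ ℤ) →ₗ[ℤ] (E →₀ ℤ))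
    (I : (V →₀ ℤ) →ₗ[ℤ] (V' →₀ ℤ)) (R : (V' →₀ ℤ) →ₗ[ℤ] (V →₀ ℤ))
    (hA : ∀ x ∈ H1 V E t h, A x ∈ H1 V' E' t' h')
    (hB : ∀ x ∈ H1 V' E' t' h', B x ∈ H1 V E t h)
    (hI : mhRel V E t h eul ≤ (mhRel V' E' t' h' eul').comap I)
    (hR : mhRel V' E' t' h' eul' ≤ (mhRel V E t h eul).comap R)
    (hBA : ∀ x ∈ H1 V E t h, B (A x) = x)
    (hRI : ∀ y, R (I y) - y ∈ mhRel V E t h eul)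
    (f : H1 V E t h →ₗ[ℤ] MH V E t h eul) :
    conj A R hA hR (conj B I hB hI f) = f := by
  ext x
  have h1 : B.restrict hB (A.restrict hA x) = x := Subtype.ext (hBA x.1 x.2)
  have h2 : ∀ m, Submodule.mapQ _ _ R hR (Submodule.mapQ _ _ I hI m) = m := by
    intro m
    obtain ⟨y, rfl⟩ := Submodule.Quotient.mk_surjective _ m
    exact (Submodule.Quotient.eq _).2 (hRI y)
  simp only [conj, LinearMap.coe_mk, AddHom.coe_mk, LinearMap.comp_apply, h1, h2]

/-- Graph stabilisers are isomorphic as soon as there are maps between chains in both directions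
that are mutually inverse on cycles and on meridian homology and carry relations to relations. -/
theorem stab_equiv (A : (E →₀ ℤ) →ₗ[ℤ] (E' →₀ ℤ)) (B : (E' →₀ ℤ) →ₗ[ℤ] (E →₀ ℤ))
    (I : (V →₀ ℤ) →ₗ[ℤ] (V' →₀ ℤ)) (R : (V' →₀ ℤ) →ₗ[ℤ] (V →₀ ℤ))
    (hA : ∀ x ∈ H1 V E t h, A x ∈ H1 V' E' t' h')
    (hB : ∀ x ∈ H1 V' E' t' h', B x ∈ H1 V E t h)
    (hI : mhRel V E t h eul ≤ (mhRel V' E' t' h' eul').comap I)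
    (hR : mhRel V' E' t' h' eul' ≤ (mhRel V E t h eul).comap R)
    (hBA : ∀ x ∈ H1 V E t h, B (A x) = x)
    (hAB : ∀ x ∈ H1 V' E' t' h', A (B x) = x)
    (hRI : ∀ y, R (I y) - y ∈ mhRel V E t h eul)
    (hIR : ∀ y, I (R y) - y ∈ mhRel V' E' t' h' eul')
    (hg : ∀ f ∈ gsGens V E t h, I ∘ₗ f ∘ₗ B ∈ rel t' h' eul')
    (hg' : ∀ f ∈ gsGens V' E' t' h', R ∘ₗ f ∘ₗ A ∈ rel t h eul) :
    Nonempty (Stab V E t h eul ≃+ Stab V' E' t' h' eul') := by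
  let F := Submodule.mapQ _ _ (conj B I hB hI) (conj_le B I hB hI hg)
  let G := Submodule.mapQ _ _ (conj A R hA hR) (conj_le A R hA hR hg')
  refine ⟨⟨⟨F, G, ?_, ?_⟩, F.map_add⟩⟩
  · intro m
    obtain ⟨f, rfl⟩ := Submodule.Quotient.mk_surjective _ m
    exact congrArg _ (conj_conj A B I R hA hB hI hR hBA hRI f)
  · intro m
    obtain ⟨f, rfl⟩ := Submodule.Quotient.mk_surjective _ m
    exact congrArg _ (conj_conj B A R I hB hA hR hI hAB hIR f)

end Transfer

/-! ### Comparing the incidences of the two graphs -/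

section Incidence

variable {𝓛 : Type*} [Fintype 𝓛] [DecidableEq 𝓛] {𝒬 : Finset (Finset 𝓛)}

/-- The point at which an edge of the full incidence graph ends. -/
abbrev pt (e : FullE 𝒬) : Pts 𝒬 := ⟨e.1.1, e.2.1⟩

/-- The edge of the reduced incidence graph covering a given edge of the full one: the two halves
of the subdivided edge at a double point `P` both go to the line-line edge of `P`. -/
def proj (h2 : ∀ P ∈ 𝒬, 2 ≤ P.card) (e : FullE 𝒬) : RedE1 𝒬 ⊕ RedE2 𝒬 :=
  if hc : 3 ≤ e.1.1.card then Sum.inl ⟨e.1, e.2.1, hc, e.2.2⟩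
  else Sum.inr ⟨e.1.1, e.2.1, le_antisymm (by omega) (h2 _ e.2.1)⟩

/-- The vertices of the reduced incidence graph as vertices of the full one. -/
def emb (v : 𝓛 ⊕ Pts2 𝒬) : 𝓛 ⊕ Pts 𝒬 := Sum.map id (fun P => ⟨P.1, P.2.1⟩) v

/-- The map `C₀(Γ) → C₀(Γ̂)` induced by the inclusion of vertices. -/
noncomputable def embC0 (𝒬 : Finset (Finset 𝓛)) :
    (𝓛 ⊕ Pts2 𝒬 →₀ ℤ) →ₗ[ℤ] (𝓛 ⊕ Pts 𝒬 →₀ ℤ) :=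
  Finsupp.lmapDomain ℤ ℤ emb

/-- The map `C₀(Γ̂) → C₀(Γ)` sending a double point to the sum of its two lines and fixing all
other vertices. -/
noncomputable def collapse (𝒬 : Finset (Finset 𝓛)) :
    (𝓛 ⊕ Pts 𝒬 →₀ ℤ) →ₗ[ℤ] (𝓛 ⊕ Pts2 𝒬 →₀ ℤ) :=
  Finsupp.linearCombination ℤ (Sum.elim (fun L => Finsupp.single (Sum.inl L) 1)
    fun P => if hc : 3 ≤ P.1.card then Finsupp.single (Sum.inr ⟨P.1, P.2, hc⟩) 1
      else ∑ L ∈ P.1, Finsupp.single (Sum.inl L) 1)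

@[simp] lemma embC0_single (v : 𝓛 ⊕ Pts2 𝒬) (n : ℤ) :
    embC0 𝒬 (Finsupp.single v n) = Finsupp.single (emb v) n := by
  simp [embC0]

@[simp] lemma collapse_inl (L : 𝓛) :
    collapse 𝒬 (Finsupp.single (Sum.inl L) 1) = Finsupp.single (Sum.inl L) 1 := by
  simp [collapse]

lemma collapse_big (P : Pts 𝒬) (hc : 3 ≤ P.1.card) :
    collapse 𝒬 (Finsupp.single (Sum.inr P) 1) = Finsupp.single (Sum.inr ⟨P.1, P.2, hc⟩) 1 := by
  simp [collapse, hc]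

lemma collapse_double (P : Pts 𝒬) (hc : ¬ 3 ≤ P.1.card) :
    collapse 𝒬 (Finsupp.single (Sum.inr P) 1) = ∑ L ∈ P.1, Finsupp.single (Sum.inl L) 1 := by
  simp [collapse, hc]

lemma collapse_emb (y : 𝓛 ⊕ Pts2 𝒬 →₀ ℤ) : collapse 𝒬 (embC0 𝒬 y) = y := by
  have : collapse 𝒬 ∘ₗ embC0 𝒬 = LinearMap.id := by
    ext1 v
    ext1
    rcases v with L | P
    · simp [emb]
    · simp [emb, collapse_big ⟨P.1, P.2.1⟩ P.2.2]
  exact LinearMap.congr_fun this y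

variable {h2 : ∀ P ∈ 𝒬, 2 ≤ P.card}

lemma proj_cases (e : FullE 𝒬) :
    (∃ hc : 3 ≤ e.1.1.card, proj h2 e = Sum.inl ⟨e.1, e.2.1, hc, e.2.2⟩) ∨
    (∃ hc : e.1.1.card = 2, proj h2 e = Sum.inr ⟨e.1.1, e.2.1, hc⟩) := by
  by_cases hc : 3 ≤ e.1.1.card
  · exact Or.inl ⟨hc, by simp [proj, hc]⟩
  · exact Or.inr ⟨le_antisymm (by omega) (h2 _ e.2.1), by simp [proj, hc]⟩

lemma proj_inj {e e' : FullE 𝒬} (he : proj h2 e = proj h2 e') : e.1.1 = e'.1.1 := by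
  rcases proj_cases (h2 := h2) e with ⟨hc, h⟩ | ⟨hc, h⟩ <;>
  rcases proj_cases (h2 := h2) e' with ⟨hc', h'⟩ | ⟨hc', h'⟩ <;> rw [h, h'] at he
  · simp only [Sum.inl.injEq, Subtype.mk.injEq] at he; rw [he]
  · cases he
  · cases he
  · simpa using he

lemma proj_of_big (r : RedE1 𝒬) : proj h2 ⟨r.1, r.2.1, r.2.2.2⟩ = Sum.inl r := by
  simp [proj, r.2.2.1]

lemma proj_of_double (r : RedE2 𝒬) {L : 𝓛} (hL : L ∈ r.1) :
    proj h2 ⟨(r.1, L), r.2.1, hL⟩ = Sum.inr r := by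
  simp [proj, r.2.2]

variable {tf hf : FullE 𝒬 → 𝓛 ⊕ Pts 𝒬}
  (horf : ∀ e : FullE 𝒬,
      (tf e = Sum.inl e.1.2 ∧ hf e = Sum.inr ⟨e.1.1, e.2.1⟩) ∨
      (tf e = Sum.inr ⟨e.1.1, e.2.1⟩ ∧ hf e = Sum.inl e.1.2))
  {tr hr : RedE1 𝒬 ⊕ RedE2 𝒬 → 𝓛 ⊕ Pts2 𝒬}
  (horr1 : ∀ e : RedE1 𝒬,
      (tr (Sum.inl e) = Sum.inl e.1.2 ∧
        hr (Sum.inl e) = Sum.inr ⟨e.1.1, e.2.1, e.2.2.1⟩) ∨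
      (tr (Sum.inl e) = Sum.inr ⟨e.1.1, e.2.1, e.2.2.1⟩ ∧
        hr (Sum.inl e) = Sum.inl e.1.2))
  (horr2 : ∀ e : RedE2 𝒬, ∃ L L' : 𝓛, L ≠ L' ∧ e.1 = {L, L'} ∧
      tr (Sum.inr e) = Sum.inl L ∧ hr (Sum.inr e) = Sum.inl L')

include horf in
lemma f_ne (e : FullE 𝒬) : tf e ≠ hf e := by
  rcases horf e with ⟨h, h'⟩ | ⟨h, h'⟩ <;> rw [h, h'] <;> simp

include horf in
lemma f_inc_inl (e : FullE 𝒬) (L : 𝓛) : Inc tf hf e (Sum.inl L) ↔ e.1.2 = L := by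
  rcases horf e with ⟨h, h'⟩ | ⟨h, h'⟩ <;> simp [Inc, h, h']

include horf in
lemma f_inc_inr (e : FullE 𝒬) (P : Pts 𝒬) : Inc tf hf e (Sum.inr P) ↔ e.1.1 = P.1 := by
  rcases horf e with ⟨h, h'⟩ | ⟨h, h'⟩ <;> simp [Inc, h, h', Subtype.ext_iff]

include horf in
lemma f_other_inl (e : FullE 𝒬) :
    other (𝓛 ⊕ Pts 𝒬) (FullE 𝒬) tf hf e (Sum.inl e.1.2) = Sum.inr (pt e) := by
  rcases horf e with ⟨h, h'⟩ | ⟨h, h'⟩ <;> simp [other, h, h']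

include horf in
lemma f_other_inr (e : FullE 𝒬) :
    other (𝓛 ⊕ Pts 𝒬) (FullE 𝒬) tf hf e (Sum.inr (pt e)) = Sum.inl e.1.2 := by
  rcases horf e with ⟨h, h'⟩ | ⟨h, h'⟩ <;> simp [other, h, h']

include horf in
lemma f_sgn (e : FullE 𝒬) :
    sgn (𝓛 ⊕ Pts 𝒬) (FullE 𝒬) tf e (Sum.inr (pt e)) =
      -sgn (𝓛 ⊕ Pts 𝒬) (FullE 𝒬) tf e (Sum.inl e.1.2) := by
  rcases horf e with ⟨h, h'⟩ | ⟨h, h'⟩ <;> simp [sgn, h]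

include horr1 horr2 in
lemma r_ne (e : RedE1 𝒬 ⊕ RedE2 𝒬) : tr e ≠ hr e := by
  rcases e with e | e
  · rcases horr1 e with ⟨h, h'⟩ | ⟨h, h'⟩ <;> rw [h, h'] <;> simp
  · obtain ⟨L, L', hne, -, h, h'⟩ := horr2 e
    rw [h, h']; simpa using hne

include horr1 in
lemma r1_inc_inl (e : RedE1 𝒬) (L : 𝓛) : Inc tr hr (Sum.inl e) (Sum.inl L) ↔ e.1.2 = L := by
  rcases horr1 e with ⟨h, h'⟩ | ⟨h, h'⟩ <;> simp [Inc, h, h']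

include horr1 in
lemma r1_inc_inr (e : RedE1 𝒬) (P : Pts2 𝒬) :
    Inc tr hr (Sum.inl e) (Sum.inr P) ↔ e.1.1 = P.1 := by
  rcases horr1 e with ⟨h, h'⟩ | ⟨h, h'⟩ <;> simp [Inc, h, h', Subtype.ext_iff]

include horr2 in
lemma r2_inc_inl (e : RedE2 𝒬) (L : 𝓛) : Inc tr hr (Sum.inr e) (Sum.inl L) ↔ L ∈ e.1 := by
  obtain ⟨M, M', hne, hM, h, h'⟩ := horr2 e
  simp [Inc, h, h', hM, eq_comm]

include horr2 in
lemma r2_inc_inr (e : RedE2 𝒬) (P : Pts2 𝒬) : ¬ Inc tr hr (Sum.inr e) (Sum.inr P) := by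
  obtain ⟨M, M', hne, hM, h, h'⟩ := horr2 e
  simp [Inc, h, h']

include horr1 in
lemma r1_other_inl (e : RedE1 𝒬) :
    other (𝓛 ⊕ Pts2 𝒬) (RedE1 𝒬 ⊕ RedE2 𝒬) tr hr (Sum.inl e) (Sum.inl e.1.2) =
      Sum.inr ⟨e.1.1, e.2.1, e.2.2.1⟩ := by
  rcases horr1 e with ⟨h, h'⟩ | ⟨h, h'⟩ <;> simp [other, h, h']

include horr1 in
lemma r1_other_inr (e : RedE1 𝒬) :
    other (𝓛 ⊕ Pts2 𝒬) (RedE1 𝒬 ⊕ RedE2 𝒬) tr hr (Sum.inl e)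
      (Sum.inr ⟨e.1.1, e.2.1, e.2.2.1⟩) = Sum.inl e.1.2 := by
  rcases horr1 e with ⟨h, h'⟩ | ⟨h, h'⟩ <;> simp [other, h, h']

include horr1 in
lemma r1_sgn (e : RedE1 𝒬) :
    sgn (𝓛 ⊕ Pts2 𝒬) (RedE1 𝒬 ⊕ RedE2 𝒬) tr (Sum.inl e) (Sum.inr ⟨e.1.1, e.2.1, e.2.2.1⟩) =
      -sgn (𝓛 ⊕ Pts2 𝒬) (RedE1 𝒬 ⊕ RedE2 𝒬) tr (Sum.inl e) (Sum.inl e.1.2) := by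
  rcases horr1 e with ⟨h, h'⟩ | ⟨h, h'⟩ <;> simp [sgn, h]

include horr2 in
/-- The two lines `L`, `L'` through a double point are the endpoints of its line-line edge. -/
lemma r2_ends (e : RedE2 𝒬) {L : 𝓛} (hL : L ∈ e.1) :
    ∃ L', L ≠ L' ∧ e.1 = {L, L'} ∧
      other (𝓛 ⊕ Pts2 𝒬) (RedE1 𝒬 ⊕ RedE2 𝒬) tr hr (Sum.inr e) (Sum.inl L) = Sum.inl L' ∧
      sgn (𝓛 ⊕ Pts2 𝒬) (RedE1 𝒬 ⊕ RedE2 𝒬) tr (Sum.inr e) (Sum.inl L') =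
        -sgn (𝓛 ⊕ Pts2 𝒬) (RedE1 𝒬 ⊕ RedE2 𝒬) tr (Sum.inr e) (Sum.inl L) := by
  obtain ⟨M, M', hne, hM, h, h'⟩ := horr2 e
  rw [hM, Finset.mem_insert, Finset.mem_singleton] at hL
  rcases hL with rfl | rfl
  · exact ⟨M', hne, hM, by simp [other, h, h'], by simp [sgn, h, hne]⟩
  · exact ⟨M, hne.symm, by rw [hM, Finset.pair_comm], by simp [other, h, hne], by simp [sgn, h, hne]⟩

include horr1 horr2 in
lemma proj_inc (e : FullE 𝒬) : Inc tr hr (proj h2 e) (Sum.inl e.1.2) := by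
  rcases proj_cases (h2 := h2) e with ⟨hc, h⟩ | ⟨hc, h⟩ <;> rw [h]
  · rw [r1_inc_inl horr1]
  · rw [r2_inc_inl horr2]; exact e.2.2

include horr1 horr2 in
lemma exists_lift {r : RedE1 𝒬 ⊕ RedE2 𝒬} {L : 𝓛} (hL : Inc tr hr r (Sum.inl L)) :
    ∃ e : FullE 𝒬, e.1.2 = L ∧ proj h2 e = r := by
  rcases r with r | r
  · exact ⟨⟨r.1, r.2.1, r.2.2.2⟩, (r1_inc_inl horr1 _ _).1 hL, proj_of_big r⟩
  · exact ⟨⟨(r.1, L), r.2.1, (r2_inc_inl horr2 _ _).1 hL⟩, rfl,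
      proj_of_double r ((r2_inc_inl horr2 _ _).1 hL)⟩

include h2 in
lemma proj_surj : Function.Surjective (proj h2) := by
  rintro (r | r)
  · exact ⟨_, proj_of_big r⟩
  · obtain ⟨L, hL⟩ : r.1.Nonempty := Finset.card_pos.1 (by have := r.2.2; omega)
    exact ⟨_, proj_of_double r hL⟩

include horr1 horr2 in
/-- The edges of the two graphs at a given line correspond to each other. -/
lemma sum_at_line {M : Type*} [AddCommMonoid M] (G : RedE1 𝒬 ⊕ RedE2 𝒬 → M) (L : 𝓛) :
    (∑ e : FullE 𝒬, if e.1.2 = L then G (proj h2 e) else 0) =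
      ∑ r, if Inc tr hr r (Sum.inl L) then G r else 0 := by
  rw [← Finset.sum_filter, ← Finset.sum_filter]
  refine Finset.sum_bij (fun e _ => proj h2 e) ?_ ?_ ?_ (fun _ _ => rfl)
  · intro e he
    rw [Finset.mem_filter] at he ⊢
    exact ⟨Finset.mem_univ _, he.2 ▸ proj_inc horr1 horr2 e⟩
  · intro e he e' he' h
    rw [Finset.mem_filter] at he he'
    exact Subtype.ext (Prod.ext (proj_inj h) (he.2.trans he'.2.symm))
  · intro r hL
    obtain ⟨e, he, rfl⟩ := exists_lift (h2 := h2) horr1 horr2 (Finset.mem_filter.1 hL).2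
    exact ⟨e, by simp [he], rfl⟩

include horr1 horr2 in
/-- The edges of the two graphs at a point of multiplicity `> 2` correspond to each other. -/
lemma sum_at_point {M : Type*} [AddCommMonoid M] (G : RedE1 𝒬 ⊕ RedE2 𝒬 → M) (P : Pts2 𝒬) :
    (∑ e : FullE 𝒬, if e.1.1 = P.1 then G (proj h2 e) else 0) =
      ∑ r, if Inc tr hr r (Sum.inr P) then G r else 0 := by
  rw [← Finset.sum_filter, ← Finset.sum_filter]
  have key : ∀ e : FullE 𝒬, e.1.1 = P.1 →
      ∃ hc : 3 ≤ e.1.1.card, proj h2 e = Sum.inl ⟨e.1, e.2.1, hc, e.2.2⟩ := by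
    intro e he
    have : 3 ≤ e.1.1.card := by rw [he]; exact P.2.2
    exact ⟨this, by simp [proj, this]⟩
  refine Finset.sum_bij (fun e _ => proj h2 e) ?_ ?_ ?_ (fun _ _ => rfl)
  · intro e he
    rw [Finset.mem_filter] at he ⊢
    obtain ⟨hc, h⟩ := key e he.2
    rw [h, r1_inc_inr horr1]
    exact ⟨Finset.mem_univ _, he.2⟩
  · intro e he e' he' h
    rw [Finset.mem_filter] at he he'
    obtain ⟨hc, h1⟩ := key e he.2
    obtain ⟨hc', h1'⟩ := key e' he'.2
    simp only [h1, h1', Sum.inl.injEq, Subtype.mk.injEq] at h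
    exact Subtype.ext h
  · rintro (r | r) hP
    · rw [Finset.mem_filter, r1_inc_inr horr1] at hP
      exact ⟨⟨r.1, r.2.1, r.2.2.2⟩, by simpa using hP.2, proj_of_big r⟩
    · exact absurd (Finset.mem_filter.1 hP).2 (r2_inc_inr horr2 r P)

/-- There are exactly two edges of the full graph at a double point. -/
lemma sum_at_double {M : Type*} [AddCommMonoid M] (g : FullE 𝒬 → M) (e e' : FullE 𝒬)
    (hne : e.1.2 ≠ e'.1.2) (he : e.1.1 = {e.1.2, e'.1.2}) (he' : e'.1.1 = e.1.1) :
    (∑ d : FullE 𝒬, if d.1.1 = e.1.1 then g d else 0) = g e + g e' := by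
  rw [← Finset.sum_filter]
  have : (Finset.univ.filter fun d : FullE 𝒬 => d.1.1 = e.1.1) = {e, e'} := by
    ext d
    simp only [Finset.mem_filter, Finset.mem_univ, true_and, Finset.mem_insert,
      Finset.mem_singleton]
    constructor
    · intro hd
      have := d.2.2
      rw [hd, he, Finset.mem_insert, Finset.mem_singleton] at this
      rcases this with h | h
      · exact Or.inl (Subtype.ext (Prod.ext hd h))
      · exact Or.inr (Subtype.ext (Prod.ext (hd.trans he'.symm) h))
    · rintro (rfl | rfl)
      · rfl
      · exact he'
  rw [this, Finset.sum_pair (by rintro rfl; exact hne rfl)]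

/-! ### Cycles -/

/-- The sign of an edge of the full graph at its line. -/
abbrev sf (tf : FullE 𝒬 → 𝓛 ⊕ Pts 𝒬) (e : FullE 𝒬) : ℤ :=
  sgn (𝓛 ⊕ Pts 𝒬) (FullE 𝒬) tf e (Sum.inl e.1.2)

/-- The sign at the line of `e` of the reduced edge covering `e`. -/
abbrev sr (h2 : ∀ P ∈ 𝒬, 2 ≤ P.card) (tr : RedE1 𝒬 ⊕ RedE2 𝒬 → 𝓛 ⊕ Pts2 𝒬) (e : FullE 𝒬) : ℤ :=
  sgn (𝓛 ⊕ Pts2 𝒬) (RedE1 𝒬 ⊕ RedE2 𝒬) tr (proj h2 e) (Sum.inl e.1.2)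

/-- The subdivision map `C₁(Γ) → C₁(Γ̂)`: every edge of the full graph carries the coefficient of
the reduced edge covering it, both counted outwards from the line. -/
noncomputable def subdiv (h2 : ∀ P ∈ 𝒬, 2 ≤ P.card) (tf : FullE 𝒬 → 𝓛 ⊕ Pts 𝒬)
    (tr : RedE1 𝒬 ⊕ RedE2 𝒬 → 𝓛 ⊕ Pts2 𝒬) :
    (RedE1 𝒬 ⊕ RedE2 𝒬 →₀ ℤ) →ₗ[ℤ] (FullE 𝒬 →₀ ℤ) :=
  (Finsupp.linearEquivFunOnFinite ℤ ℤ (FullE 𝒬)).symm.toLinearMap ∘ₗ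
    LinearMap.pi fun e => (sf tf e * sr h2 tr e) • Finsupp.lapply (proj h2 e)

/-- The map `C₁(Γ̂) → C₁(Γ)` which reads off the coefficient of a reduced edge from one of the full
edges subdividing it; the choice matters only off the cycles. -/
noncomputable def unsubdiv (h2 : ∀ P ∈ 𝒬, 2 ≤ P.card) (tf : FullE 𝒬 → 𝓛 ⊕ Pts 𝒬)
    (tr : RedE1 𝒬 ⊕ RedE2 𝒬 → 𝓛 ⊕ Pts2 𝒬) :
    (FullE 𝒬 →₀ ℤ) →ₗ[ℤ] (RedE1 𝒬 ⊕ RedE2 𝒬 →₀ ℤ) :=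
  (Finsupp.linearEquivFunOnFinite ℤ ℤ (RedE1 𝒬 ⊕ RedE2 𝒬)).symm.toLinearMap ∘ₗ
    LinearMap.pi fun r =>
      (sf tf (Function.surjInv (proj_surj (h2 := h2)) r) *
        sr h2 tr (Function.surjInv (proj_surj (h2 := h2)) r)) •
      Finsupp.lapply (Function.surjInv (proj_surj (h2 := h2)) r)

lemma subdiv_apply (x : RedE1 𝒬 ⊕ RedE2 𝒬 →₀ ℤ) (e : FullE 𝒬) :
    subdiv h2 tf tr x e = sf tf e * sr h2 tr e * x (proj h2 e) := by
  simp [subdiv]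

lemma unsubdiv_apply (x : FullE 𝒬 →₀ ℤ) (r : RedE1 𝒬 ⊕ RedE2 𝒬) :
    ∃ e, proj h2 e = r ∧ unsubdiv h2 tf tr x r = sf tf e * sr h2 tr e * x e :=
  ⟨Function.surjInv (proj_surj (h2 := h2)) r, Function.surjInv_eq _ _, by simp [unsubdiv]⟩

lemma sf_sq (e : FullE 𝒬) : sf tf e * sf tf e = 1 := sgn_mul_self _ _ _

lemma sr_sq (e : FullE 𝒬) : sr h2 tr e * sr h2 tr e = 1 := sgn_mul_self _ _ _

lemma unsubdiv_subdiv (x : RedE1 𝒬 ⊕ RedE2 𝒬 →₀ ℤ) :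
    unsubdiv h2 tf tr (subdiv h2 tf tr x) = x := by
  ext r
  obtain ⟨e, rfl, h⟩ := unsubdiv_apply (h2 := h2) (tf := tf) (tr := tr) (subdiv h2 tf tr x) r
  rw [h, subdiv_apply]
  linear_combination (sr h2 tr e * sr h2 tr e * x (proj h2 e)) * sf_sq (tf := tf) e +
    x (proj h2 e) * sr_sq (h2 := h2) (tr := tr) e

include horf in
lemma f_bdry_inl (x : FullE 𝒬 →₀ ℤ) (L : 𝓛) :
    bdry _ _ tf hf x (Sum.inl L) = -∑ e : FullE 𝒬, if e.1.2 = L then sf tf e * x e else 0 := by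
  rw [bdry_apply _ _ (f_ne horf)]
  congr 1
  refine Finset.sum_congr rfl fun e _ => ?_
  simp only [f_inc_inl horf]
  refine if_ctx_congr Iff.rfl (fun h => ?_) (fun _ => rfl)
  rw [← h]

include horf in
lemma f_bdry_inr (x : FullE 𝒬 →₀ ℤ) (P : Pts 𝒬) :
    bdry _ _ tf hf x (Sum.inr P) = ∑ e : FullE 𝒬, if e.1.1 = P.1 then sf tf e * x e else 0 := by
  rw [bdry_apply _ _ (f_ne horf), ← Finset.sum_neg_distrib]
  refine Finset.sum_congr rfl fun e _ => ?_
  simp only [f_inc_inr horf]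
  split_ifs with h
  · have : P = pt e := Subtype.ext h.symm
    rw [this, f_sgn horf]; ring
  · simp

include horr1 horr2 in
lemma r_bdry_inl (x : RedE1 𝒬 ⊕ RedE2 𝒬 →₀ ℤ) (L : 𝓛) :
    bdry _ _ tr hr x (Sum.inl L) =
      -∑ e : FullE 𝒬, if e.1.2 = L then sr h2 tr e * x (proj h2 e) else 0 := by
  rw [bdry_apply _ _ (r_ne horr1 horr2), ← sum_at_line (h2 := h2) horr1 horr2]
  congr 1
  refine Finset.sum_congr rfl fun e _ => ?_
  refine if_ctx_congr Iff.rfl (fun h => ?_) (fun _ => rfl)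
  rw [← h]

include horr1 horr2 in
lemma r_bdry_inr (x : RedE1 𝒬 ⊕ RedE2 𝒬 →₀ ℤ) (P : Pts2 𝒬) :
    bdry _ _ tr hr x (Sum.inr P) =
      ∑ e : FullE 𝒬, if e.1.1 = P.1 then sr h2 tr e * x (proj h2 e) else 0 := by
  rw [bdry_apply _ _ (r_ne horr1 horr2), ← sum_at_point (h2 := h2) horr1 horr2,
    ← Finset.sum_neg_distrib]
  refine Finset.sum_congr rfl fun e _ => ?_
  split_ifs with h
  · rcases proj_cases (h2 := h2) e with ⟨hc, h'⟩ | ⟨hc, h'⟩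
    · have : P = ⟨e.1.1, e.2.1, hc⟩ := Subtype.ext h.symm
      have h3 := r1_sgn horr1 ⟨e.1, e.2.1, hc, e.2.2⟩
      simp only at h3
      rw [sr, h', this, h3]; ring
    · have := P.2.2
      rw [← h] at this; omega
  · simp

/-- An edge `e` at a double point has a partner covered by the same reduced edge, and the two of
them are all the edges at that point. -/
lemma double_partner (e : FullE 𝒬) (hc : e.1.1.card = 2) {L' : 𝓛} (hne : e.1.2 ≠ L')
    (hP : e.1.1 = {e.1.2, L'}) :
    ∃ e' : FullE 𝒬, e'.1.2 = L' ∧ e'.1.1 = e.1.1 ∧ proj h2 e' = proj h2 e ∧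
      ∀ g : FullE 𝒬 → ℤ, (∑ d : FullE 𝒬, if d.1.1 = e.1.1 then g d else 0) = g e + g e' := by
  have hL' : L' ∈ e.1.1 := by rw [hP]; simp
  refine ⟨⟨(e.1.1, L'), e.2.1, hL'⟩, rfl, rfl, ?_, fun g => sum_at_double g e _ hne hP rfl⟩
  simp [proj, hc]

include horr2 in
/-- At a double point the two halves of the subdivided edge have opposite signs. -/
lemma double_sr (e : FullE 𝒬) (hc : e.1.1.card = 2) :
    ∃ e' : FullE 𝒬, e'.1.2 ≠ e.1.2 ∧ e.1.1 = {e.1.2, e'.1.2} ∧ e'.1.1 = e.1.1 ∧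
      proj h2 e' = proj h2 e ∧ sr h2 tr e' = -sr h2 tr e ∧
      ∀ g : FullE 𝒬 → ℤ, (∑ d : FullE 𝒬, if d.1.1 = e.1.1 then g d else 0) = g e + g e' := by
  obtain ⟨L', hne, hP, -, hs⟩ := r2_ends horr2 ⟨e.1.1, e.2.1, hc⟩ e.2.2
  obtain ⟨e', rfl, h1, h3, h4⟩ := double_partner (h2 := h2) e hc hne hP
  refine ⟨e', hne.symm, hP, h1, h3, ?_, h4⟩
  rw [sr, sr, h3]
  rcases proj_cases (h2 := h2) e with ⟨hc', h'⟩ | ⟨hc, h'⟩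
  · omega
  · rw [h', hs]

include horf horr1 horr2 in
lemma bdry_subdiv_inl (x : RedE1 𝒬 ⊕ RedE2 𝒬 →₀ ℤ) (L : 𝓛) :
    bdry _ _ tf hf (subdiv h2 tf tr x) (Sum.inl L) = bdry _ _ tr hr x (Sum.inl L) := by
  rw [f_bdry_inl horf, r_bdry_inl (h2 := h2) horr1 horr2]
  congr 1
  refine Finset.sum_congr rfl fun e _ => ?_
  rw [subdiv_apply, ← mul_assoc, ← mul_assoc, sf_sq, one_mul]

include horf in
lemma bdry_subdiv_inr (x : RedE1 𝒬 ⊕ RedE2 𝒬 →₀ ℤ) (P : Pts 𝒬) :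
    bdry _ _ tf hf (subdiv h2 tf tr x) (Sum.inr P) =
      ∑ e : FullE 𝒬, if e.1.1 = P.1 then sr h2 tr e * x (proj h2 e) else 0 := by
  rw [f_bdry_inr horf]
  refine Finset.sum_congr rfl fun e _ => ?_
  rw [subdiv_apply, ← mul_assoc, ← mul_assoc, sf_sq, one_mul]

lemma mem_H1 {V E : Type*} [Fintype V] [Fintype E] [DecidableEq V] [DecidableEq E]
    {t h : E → V} {x : E →₀ ℤ} : x ∈ H1 V E t h ↔ ∀ v, bdry V E t h x v = 0 := by
  rw [H1, LinearMap.mem_ker, Finsupp.ext_iff]; rfl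

include horf horr1 horr2 in
/-- A chain of the reduced graph is a cycle if and only if its subdivision is. -/
lemma subdiv_mem_H1 (x : RedE1 𝒬 ⊕ RedE2 𝒬 →₀ ℤ) :
    subdiv h2 tf tr x ∈ H1 _ _ tf hf ↔ x ∈ H1 _ _ tr hr := by
  rw [mem_H1, mem_H1]
  constructor
  · rintro H (L | P)
    · rw [← bdry_subdiv_inl (h2 := h2) horf horr1 horr2]; exact H _
    · have := H (Sum.inr ⟨P.1, P.2.1⟩)
      rwa [bdry_subdiv_inr horf, ← r_bdry_inr (h2 := h2) horr1 horr2] at this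
  · rintro H (L | P)
    · rw [bdry_subdiv_inl horf horr1 horr2]; exact H _
    · rw [bdry_subdiv_inr horf]
      by_cases hc : 3 ≤ P.1.card
      · exact (r_bdry_inr (h2 := h2) horr1 horr2 x ⟨P.1, P.2, hc⟩).symm.trans (H _)
      · have hc : P.1.card = 2 := le_antisymm (by omega) (h2 _ P.2)
        obtain ⟨L, hL⟩ : P.1.Nonempty := Finset.card_pos.1 (by omega)
        obtain ⟨e', -, -, -, h3, h4, h5⟩ := double_sr (h2 := h2) horr2 ⟨(P.1, L), P.2, hL⟩ hc
        rw [h5, h3, h4]; ring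

include horf horr2 in
/-- On a cycle of the full graph, the two halves of a subdivided edge carry the same flow. -/
lemma flow_eq {x : FullE 𝒬 →₀ ℤ} (hx : x ∈ H1 _ _ tf hf) {e e' : FullE 𝒬}
    (hee : proj h2 e = proj h2 e') :
    sf tf e * sr h2 tr e * x e = sf tf e' * sr h2 tr e' * x e' := by
  by_cases hL : e.1.2 = e'.1.2
  · rw [Subtype.ext (Prod.ext (proj_inj hee) hL) (a1 := e)]
  rcases proj_cases (h2 := h2) e with ⟨hc, h⟩ | ⟨hc, h⟩
  · rcases proj_cases (h2 := h2) e' with ⟨hc', h'⟩ | ⟨hc', h'⟩ <;> rw [h, h'] at hee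
    · simp only [Sum.inl.injEq, Subtype.mk.injEq] at hee
      exact absurd (congrArg Prod.snd hee) hL
    · cases hee
  · obtain ⟨d, -, hP, h1, -, h4, h5⟩ := double_sr (h2 := h2) horr2 e hc
    have hd : e' = d := by
      refine Subtype.ext (Prod.ext ((proj_inj hee).symm.trans h1.symm) ?_)
      have := e'.2.2
      rw [← proj_inj hee, hP, Finset.mem_insert, Finset.mem_singleton] at this
      exact this.resolve_left (Ne.symm hL)
    subst hd
    have := mem_H1.1 hx (Sum.inr (pt e))
    rw [f_bdry_inr horf, h5] at this
    rw [h4]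
    linear_combination sr h2 tr e * this

include horf horr2 in
lemma unsubdiv_proj {x : FullE 𝒬 →₀ ℤ} (hx : x ∈ H1 _ _ tf hf) (e : FullE 𝒬) :
    unsubdiv h2 tf tr x (proj h2 e) = sf tf e * sr h2 tr e * x e := by
  obtain ⟨e', he, h⟩ := unsubdiv_apply (h2 := h2) (tf := tf) (tr := tr) x (proj h2 e)
  rw [h]
  exact flow_eq horf horr2 hx he

include horf horr2 in
lemma subdiv_unsubdiv {x : FullE 𝒬 →₀ ℤ} (hx : x ∈ H1 _ _ tf hf) :
    subdiv h2 tf tr (unsubdiv h2 tf tr x) = x := by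
  ext e
  rw [subdiv_apply, unsubdiv_proj horf horr2 hx]
  linear_combination (sr h2 tr e * sr h2 tr e * x e) * sf_sq (tf := tf) e +
    x e * sr_sq (h2 := h2) (tr := tr) e

include horf horr1 horr2 in
lemma unsubdiv_mem_H1 (x : FullE 𝒬 →₀ ℤ) (hx : x ∈ H1 _ _ tf hf) :
    unsubdiv h2 tf tr x ∈ H1 _ _ tr hr := by
  rw [← subdiv_mem_H1 (h2 := h2) horf horr1 horr2, subdiv_unsubdiv horf horr2 hx]
  exact hx

/-! ### Meridian homology -/

/-- The indicator of the line-line edges of the reduced graph. -/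
def dbl (r : RedE1 𝒬 ⊕ RedE2 𝒬) : ℤ := Sum.elim (fun _ => 0) (fun _ => 1) r

include horr1 horr2 in
/-- Collapsing the point of `e` gives the other end of the reduced edge covering `e`, plus the line
of `e` itself if the point is double. -/
lemma collapse_pt (e : FullE 𝒬) :
    collapse 𝒬 (Finsupp.single (Sum.inr (pt e)) 1) =
      Finsupp.single (other _ _ tr hr (proj h2 e) (Sum.inl e.1.2)) 1 +
        dbl (proj h2 e) • Finsupp.single (Sum.inl e.1.2) 1 := by
  rcases proj_cases (h2 := h2) e with ⟨hc, h⟩ | ⟨hc, h⟩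
  · have := r1_other_inl horr1 ⟨e.1, e.2.1, hc, e.2.2⟩
    simp only at this
    rw [h, collapse_big _ hc, this]
    simp [dbl]
  · obtain ⟨L', hne, hP, ho, -⟩ := r2_ends horr2 ⟨e.1.1, e.2.1, hc⟩ e.2.2
    rw [h, collapse_double _ (by simp [hc]), ho]
    simp only at hP
    have : (pt e).1 = {e.1.2, L'} := hP
    rw [this, Finset.sum_pair hne]
    simp [dbl, add_comm]

lemma sum_over_point {M : Type*} [AddCommMonoid M] (G : 𝓛 → M) (P : Pts 𝒬) :
    (∑ e : FullE 𝒬, if e.1.1 = P.1 then G e.1.2 else 0) = ∑ L ∈ P.1, G L := by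
  rw [← Finset.sum_filter]
  refine Finset.sum_bij (fun e _ => e.1.2) ?_ ?_ ?_ (fun _ _ => rfl)
  · intro e he
    rw [← (Finset.mem_filter.1 he).2]; exact e.2.2
  · intro e he e' he' h
    rw [Finset.mem_filter] at he he'
    exact Subtype.ext (Prod.ext (he.2.trans he'.2.symm) h)
  · intro L hL
    exact ⟨⟨(P.1, L), P.2, hL⟩, by simp, rfl⟩

lemma nL_eq (L : 𝓛) : (nL 𝒬 L : ℤ) = ∑ e : FullE 𝒬, if e.1.2 = L then 1 else 0 := by
  rw [Finset.sum_boole, nL]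
  congr 1
  symm
  refine Finset.card_bij (fun e _ => e.1.1) ?_ ?_ ?_
  · intro e he
    rw [Finset.mem_filter] at he ⊢
    exact ⟨e.2.1, he.2 ▸ e.2.2⟩
  · intro e he e' he' h
    rw [Finset.mem_filter] at he he'
    exact Subtype.ext (Prod.ext h (he.2.trans he'.2.symm))
  · intro P hP
    rw [Finset.mem_filter] at hP
    exact ⟨⟨(P, L), hP⟩, by simp, rfl⟩

lemma bL_eq (L : 𝓛) : (bL 𝒬 L : ℤ) = ∑ e : RedE1 𝒬, if e.1.2 = L then 1 else 0 := by
  rw [Finset.sum_boole, bL]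
  congr 1
  symm
  refine Finset.card_bij (fun e _ => e.1.1) ?_ ?_ ?_
  · intro e he
    rw [Finset.mem_filter] at he ⊢
    exact ⟨e.2.1, e.2.2.1, he.2 ▸ e.2.2.2⟩
  · intro e he e' he' h
    rw [Finset.mem_filter] at he he'
    exact Subtype.ext (Prod.ext h (he.2.trans he'.2.symm))
  · intro P hP
    rw [Finset.mem_filter] at hP
    exact ⟨⟨(P, L), hP⟩, by simp, rfl⟩

include h2 horr1 horr2 in
lemma nL_bL (L : 𝓛) : (nL 𝒬 L : ℤ) =
    bL 𝒬 L + ∑ r, if Inc tr hr r (Sum.inl L) then dbl (𝒬 := 𝒬) r else 0 := by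
  rw [nL_eq, sum_at_line (h2 := h2) horr1 horr2 (fun _ => (1 : ℤ)), bL_eq,
    Fintype.sum_sum_type, Fintype.sum_sum_type]
  simp [r1_inc_inl horr1, dbl]

include h2 horf horr1 horr2 in
lemma collapse_vrel_inl (L : 𝓛) :
    collapse 𝒬 (vrel tf hf (eulFull 𝒬) (Sum.inl L)) = vrel tr hr (eulRed 𝒬) (Sum.inl L) := by
  have key : collapse 𝒬 (∑ e : FullE 𝒬, if Inc tf hf e (Sum.inl L) then
        Finsupp.single (other _ _ tf hf e (Sum.inl L)) (1 : ℤ) else 0) =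
      ∑ r, if Inc tr hr r (Sum.inl L) then
        (Finsupp.single (other _ _ tr hr r (Sum.inl L)) (1 : ℤ) +
          dbl r • Finsupp.single (Sum.inl L) (1 : ℤ)) else 0 := by
    rw [← sum_at_line (h2 := h2) horr1 horr2, map_sum]
    refine Finset.sum_congr rfl fun e _ => ?_
    simp only [f_inc_inl horf]
    split_ifs with h
    · subst h
      rw [f_other_inl horf, collapse_pt (h2 := h2) horr1 horr2]
    · simp
  rw [vrel_eq _ _ (f_ne horf), vrel_eq _ _ (r_ne horr1 horr2), map_add, key, map_smul,
    collapse_inl]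
  have : ∀ r, (if Inc tr hr r (Sum.inl L) then
        (Finsupp.single (other _ _ tr hr r (Sum.inl L)) (1 : ℤ) +
          dbl (𝒬 := 𝒬) r • Finsupp.single (Sum.inl L) (1 : ℤ)) else 0) =
      (if Inc tr hr r (Sum.inl L) then Finsupp.single (other _ _ tr hr r (Sum.inl L)) (1 : ℤ)
        else 0) + (if Inc tr hr r (Sum.inl L) then dbl (𝒬 := 𝒬) r else 0) •
          Finsupp.single (Sum.inl L) (1 : ℤ) := by
    intro r; split_ifs <;> simp
  simp only [this]
  rw [Finset.sum_add_distrib, ← Finset.sum_smul]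
  simp only [eulFull, eulRed, Sum.elim_inl]
  rw [nL_bL (h2 := h2) horr1 horr2]
  module

include horf in
lemma vrel_inr (P : Pts 𝒬) :
    vrel tf hf (eulFull 𝒬) (Sum.inr P) =
      -Finsupp.single (Sum.inr P) 1 + ∑ L ∈ P.1, Finsupp.single (Sum.inl L) 1 := by
  rw [vrel_eq _ _ (f_ne horf), ← sum_over_point]
  congr 1
  · simp [eulFull]
  · refine Finset.sum_congr rfl fun e _ => ?_
    simp only [f_inc_inr horf]
    split_ifs with h
    · have : P = pt e := Subtype.ext h.symm
      rw [this, f_other_inr horf]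
    · rfl

include h2 horf horr1 horr2 in
lemma collapse_vrel_big (P : Pts 𝒬) (hc : 3 ≤ P.1.card) :
    collapse 𝒬 (vrel tf hf (eulFull 𝒬) (Sum.inr P)) =
      vrel tr hr (eulRed 𝒬) (Sum.inr ⟨P.1, P.2, hc⟩) := by
  rw [vrel_inr horf, vrel_eq _ _ (r_ne horr1 horr2), ← sum_at_point (h2 := h2) horr1 horr2,
    map_add, map_neg, collapse_big _ hc, map_sum]
  simp only [collapse_inl]
  rw [← sum_over_point]
  congr 1
  · simp [eulRed]
  · refine Finset.sum_congr rfl fun e _ => ?_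
    refine if_ctx_congr Iff.rfl (fun h => ?_) (fun _ => rfl)
    obtain ⟨P, hP⟩ := P
    simp only at h
    subst h
    have h1 : proj h2 e = Sum.inl ⟨e.1, e.2.1, hc, e.2.2⟩ := by simp [proj, hc]
    have h3 := r1_other_inr horr1 ⟨e.1, e.2.1, hc, e.2.2⟩
    simp only at h3
    rw [h1, h3]

include horf in
lemma collapse_vrel_double (P : Pts 𝒬) (hc : ¬ 3 ≤ P.1.card) :
    collapse 𝒬 (vrel tf hf (eulFull 𝒬) (Sum.inr P)) = 0 := by
  rw [vrel_inr horf, map_add, map_neg, collapse_double _ hc, map_sum]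
  simp

include h2 horf horr1 horr2 in
lemma collapse_mhRel :
    mhRel _ _ tf hf (eulFull 𝒬) ≤ (mhRel _ _ tr hr (eulRed 𝒬)).comap (collapse 𝒬) := by
  refine mhRel_le_comap _ _ _ _ _ ?_
  rintro (L | P)
  · rw [collapse_vrel_inl (h2 := h2) horf horr1 horr2]
    exact vrel_mem _ _ _ _
  · by_cases hc : 3 ≤ P.1.card
    · rw [collapse_vrel_big (h2 := h2) horf horr1 horr2 P hc]
      exact vrel_mem _ _ _ _
    · rw [collapse_vrel_double horf P hc]
      exact Submodule.zero_mem _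

include horf in
lemma emb_collapse (y : 𝓛 ⊕ Pts 𝒬 →₀ ℤ) :
    embC0 𝒬 (collapse 𝒬 y) - y ∈ mhRel _ _ tf hf (eulFull 𝒬) := by
  induction y using Finsupp.induction_linear with
  | zero => simp
  | add y z hy hz =>
    convert Submodule.add_mem _ hy hz using 1
    simp only [map_add]
    abel
  | single v n =>
    rw [← mul_one n, ← smul_eq_mul, ← Finsupp.smul_single, map_smul, map_smul, ← smul_sub]
    refine Submodule.smul_mem _ n ?_
    rcases v with L | P
    · simp [emb]
    · by_cases hc : 3 ≤ P.1.card
      · simp [collapse_big P hc, emb]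
      · have := vrel_mem tf hf (eulFull 𝒬) (Sum.inr P)
        rw [vrel_inr horf] at this
        convert this using 1
        rw [collapse_double P hc, map_sum]
        simp [emb, sub_eq_add_neg, add_comm]

include h2 horf horr1 horr2 in
lemma emb_mhRel :
    mhRel _ _ tr hr (eulRed 𝒬) ≤ (mhRel _ _ tf hf (eulFull 𝒬)).comap (embC0 𝒬) := by
  refine mhRel_le_comap _ _ _ _ _ fun v => ?_
  have hv : vrel tr hr (eulRed 𝒬) v = collapse 𝒬 (vrel tf hf (eulFull 𝒬) (emb v)) := by
    rcases v with L | P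
    · exact (collapse_vrel_inl (h2 := h2) horf horr1 horr2 L).symm
    · exact (collapse_vrel_big (h2 := h2) horf horr1 horr2 ⟨P.1, P.2.1⟩ P.2.2).symm
  rw [hv, ← sub_add_cancel (embC0 𝒬 _) (vrel tf hf (eulFull 𝒬) (emb v))]
  exact Submodule.add_mem _ (emb_collapse horf _) (vrel_mem _ _ _ _)

include horf horr1 horr2 in
/-- In the meridian homology of the full graph, the far end of the reduced edge covering `e` equals
the point of `e`, minus the line of `e` if that point is double. -/
lemma emb_other (e : FullE 𝒬) :
    Finsupp.single (emb (other _ _ tr hr (proj h2 e) (Sum.inl e.1.2))) 1 -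
      (Finsupp.single (Sum.inr (pt e)) 1 - dbl (proj h2 e) • Finsupp.single (Sum.inl e.1.2) 1) ∈
        mhRel _ _ tf hf (eulFull 𝒬) := by
  have := emb_collapse horf (Finsupp.single (Sum.inr (pt e)) 1)
  rw [collapse_pt (h2 := h2) horr1 horr2, map_add, map_smul, embC0_single, embC0_single] at this
  convert this using 1
  simp only [emb, Sum.map_inl, id]
  abel

/-! ### Relations of the graph stabilisers -/

lemma inc_cases {V E : Type*} [DecidableEq V] {t h : E → V} {e : E} {v w : V} (hv : Inc t h e v)
    (hw : Inc t h e w) : w = v ∨ w = other V E t h e v := by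
  unfold Inc other at *
  grind

include horf horr1 horr2 in
/-- If the reduced edge of `e` ends at `v`, then `e ↦ v` is a relation of the full graph; for `v` the
far line `L'` through a double point this is because `L' = P - L` in the meridian homology. -/
lemma f_end (e : FullE 𝒬) {v : 𝓛 ⊕ Pts2 𝒬} (hv : Inc tr hr (proj h2 e) v) :
    basisHom _ _ e (Finsupp.single (emb v) 1) ∈ rel tf hf (eulFull 𝒬) := by
  have hL := gs1 (eulFull 𝒬) ((f_inc_inl horf e _).2 rfl)
  rcases inc_cases (proj_inc (h2 := h2) horr1 horr2 e) hv with rfl | rfl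
  · exact hL
  · have hP := gs1 (eulFull 𝒬) ((f_inc_inr horf e (pt e)).2 rfl)
    refine rel_congr (Submodule.sub_mem _ hP (Submodule.smul_mem _ (dbl (proj h2 e)) hL))
      fun x _ => ?_
    convert Submodule.smul_mem _ (x e) (emb_other (h2 := h2) horf horr1 horr2 e) using 1
    simp only [LinearMap.sub_apply, LinearMap.smul_apply, basisHom_apply]
    module

include horf horr1 horr2 in
/-- The relation (GS2) of the reduced graph at a line holds in the full graph. -/
lemma f_gs2 (e₁ e₂ : FullE 𝒬) (h : e₁.1.2 = e₂.1.2) :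
    sf tf e₁ • basisHom _ _ e₁
        (Finsupp.single (emb (other _ _ tr hr (proj h2 e₂) (Sum.inl e₂.1.2))) 1) +
      sf tf e₂ • basisHom _ _ e₂
        (Finsupp.single (emb (other _ _ tr hr (proj h2 e₁) (Sum.inl e₁.1.2))) 1) ∈
      rel tf hf (eulFull 𝒬) := by
  have hL₁ := gs1 (eulFull 𝒬) ((f_inc_inl horf e₁ _).2 rfl)
  have hL₂ := gs1 (eulFull 𝒬) ((f_inc_inl horf e₂ _).2 rfl)
  have H := gs2 (eulFull 𝒬) ((f_inc_inl horf e₁ _).2 rfl) ((f_inc_inl horf e₂ _).2 h.symm)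
  have ho : other _ _ tf hf e₂ (Sum.inl e₁.1.2) = Sum.inr (pt e₂) := by
    rw [h]; exact f_other_inl horf e₂
  have hs : sgn _ _ tf e₂ (Sum.inl e₁.1.2) = sf tf e₂ := by rw [h]
  have hs' : sgn _ _ tf e₁ (Sum.inl e₁.1.2) = sf tf e₁ := rfl
  rw [ho, f_other_inl horf, hs, hs'] at H
  refine rel_congr (Submodule.sub_mem _ (Submodule.sub_mem _ H
    (Submodule.smul_mem _ (sf tf e₁ * dbl (proj h2 e₂)) hL₁))
    (Submodule.smul_mem _ (sf tf e₂ * dbl (proj h2 e₁)) hL₂)) fun x _ => ?_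
  convert Submodule.add_mem _
    (Submodule.smul_mem _ (sf tf e₁ * x e₁) (emb_other (h2 := h2) horf horr1 horr2 e₂))
    (Submodule.smul_mem _ (sf tf e₂ * x e₂) (emb_other (h2 := h2) horf horr1 horr2 e₁)) using 1
  simp only [LinearMap.sub_apply, LinearMap.add_apply, LinearMap.smul_apply, basisHom_apply, h]
  module

lemma big_facts {P : Pts2 𝒬} {e : FullE 𝒬} (he : e.1.1 = P.1) :
    ∃ hc : 3 ≤ e.1.1.card, proj h2 e = Sum.inl ⟨e.1, e.2.1, hc, e.2.2⟩ ∧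
      P = ⟨e.1.1, e.2.1, hc⟩ := by
  have hc : 3 ≤ e.1.1.card := he ▸ P.2.2
  exact ⟨hc, by simp [proj, hc], Subtype.ext he.symm⟩

include horr1 in
lemma r_sgn_big {P : Pts2 𝒬} {e : FullE 𝒬} (he : e.1.1 = P.1) :
    sgn _ _ tr (proj h2 e) (Sum.inr P) = -sr h2 tr e := by
  obtain ⟨hc, h, rfl⟩ := big_facts (h2 := h2) he
  rw [sr, h]
  exact r1_sgn horr1 ⟨e.1, e.2.1, hc, e.2.2⟩

include horr1 in
lemma r_other_big {P : Pts2 𝒬} {e : FullE 𝒬} (he : e.1.1 = P.1) :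
    other _ _ tr hr (proj h2 e) (Sum.inr P) = Sum.inl e.1.2 := by
  obtain ⟨hc, h, rfl⟩ := big_facts (h2 := h2) he
  rw [h]
  exact r1_other_inr horr1 ⟨e.1, e.2.1, hc, e.2.2⟩

include horr1 in
lemma r_inc_big {P : Pts2 𝒬} {e : FullE 𝒬} (he : e.1.1 = P.1) :
    Inc tr hr (proj h2 e) (Sum.inr P) := by
  obtain ⟨hc, h, -⟩ := big_facts (h2 := h2) he
  rw [h, r1_inc_inr horr1]
  exact he

include horr1 horr2 in
lemma exists_lift_big {r : RedE1 𝒬 ⊕ RedE2 𝒬} {P : Pts2 𝒬} (hP : Inc tr hr r (Sum.inr P)) :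
    ∃ e : FullE 𝒬, e.1.1 = P.1 ∧ proj h2 e = r := by
  rcases r with r | r
  · exact ⟨⟨r.1, r.2.1, r.2.2.2⟩, (r1_inc_inr horr1 _ _).1 hP, proj_of_big r⟩
  · exact absurd hP (r2_inc_inr horr2 r P)

include horf in
lemma f_sgn' {P : Pts 𝒬} {e : FullE 𝒬} (he : e.1.1 = P.1) :
    sgn _ _ tf e (Sum.inr P) = -sf tf e := by
  have : P = pt e := Subtype.ext he.symm
  rw [this]; exact f_sgn horf e

include horf in
lemma f_other_inr' {P : Pts 𝒬} {e : FullE 𝒬} (he : e.1.1 = P.1) :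
    other _ _ tf hf e (Sum.inr P) = Sum.inl e.1.2 := by
  have : P = pt e := Subtype.ext he.symm
  rw [this]; exact f_other_inr horf e

lemma sr_cancel (e : FullE 𝒬) (c : ℤ) :
    sr h2 tr e * (sf tf e * sr h2 tr e * c) = sf tf e * c := by
  linear_combination (sf tf e * c) * sr_sq (h2 := h2) (tr := tr) e

include horf horr1 horr2 in
/-- The relations of the reduced graph hold in the full one. -/
lemma red_to_full {f} (hfg : f ∈ gsGens (𝓛 ⊕ Pts2 𝒬) (RedE1 𝒬 ⊕ RedE2 𝒬) tr hr) :
    embC0 𝒬 ∘ₗ f ∘ₗ unsubdiv h2 tf tr ∈ rel tf hf (eulFull 𝒬) := by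
  refine gsGens_induct
    (p := fun f => embC0 𝒬 ∘ₗ f ∘ₗ unsubdiv h2 tf tr ∈ rel tf hf (eulFull 𝒬)) ?_ ?_ ?_ hfg
  · intro c f hf
    rw [LinearMap.smul_comp, LinearMap.comp_smul]
    exact Submodule.smul_mem _ _ hf
  · intro r v hv
    obtain ⟨e, rfl⟩ := proj_surj (h2 := h2) r
    refine rel_congr (Submodule.smul_mem _ (sf tf e * sr h2 tr e)
      (f_end (h2 := h2) horf horr1 horr2 e hv)) fun x hx => ?_
    convert Submodule.zero_mem _
    simp only [LinearMap.comp_apply, LinearMap.smul_apply, basisHom_apply, map_smul, embC0_single,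
      unsubdiv_proj horf horr2 hx]
    module
  · rintro r₁ r₂ (L | P) h₁ h₂
    · obtain ⟨e₁, he₁, rfl⟩ := exists_lift (h2 := h2) horr1 horr2 h₁
      obtain ⟨e₂, rfl, rfl⟩ := exists_lift (h2 := h2) horr1 horr2 h₂
      refine rel_congr (f_gs2 (h2 := h2) horf horr1 horr2 e₁ e₂ he₁) fun x hx => ?_
      convert Submodule.zero_mem _
      simp only [LinearMap.comp_apply, LinearMap.smul_apply, LinearMap.add_apply, basisHom_apply,
        map_smul, map_add, embC0_single, unsubdiv_proj horf horr2 hx]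
      have hs : sgn _ _ tr (proj h2 e₁) (Sum.inl e₂.1.2) = sr h2 tr e₁ := by rw [← he₁]
      rw [hs, he₁]
      simp only [smul_smul, sr_cancel, sub_self]
    · obtain ⟨e₁, he₁, rfl⟩ := exists_lift_big (h2 := h2) horr1 horr2 h₁
      obtain ⟨e₂, he₂, rfl⟩ := exists_lift_big (h2 := h2) horr1 horr2 h₂
      have H := gs2 (eulFull 𝒬) ((f_inc_inr horf e₁ ⟨P.1, P.2.1⟩).2 he₁)
        ((f_inc_inr horf e₂ ⟨P.1, P.2.1⟩).2 he₂)
      rw [f_sgn' horf (e := e₁) he₁, f_sgn' horf (e := e₂) he₂, f_other_inr' horf (e := e₁) he₁,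
        f_other_inr' horf (e := e₂) he₂] at H
      refine rel_congr H fun x hx => ?_
      convert Submodule.zero_mem _
      rw [r_sgn_big horr1 he₁, r_sgn_big horr1 he₂, r_other_big horr1 he₁, r_other_big horr1 he₂]
      simp only [LinearMap.comp_apply, LinearMap.smul_apply, LinearMap.add_apply, basisHom_apply,
        map_smul, map_add, embC0_single, unsubdiv_proj horf horr2 hx]
      simp only [emb, Sum.map_inl, id]
      simp only [smul_smul, neg_mul, sr_cancel, sub_self]

/-- Transporting `e ↦ y` to the reduced graph puts the collapse of `y` on the reduced edge of `e`. -/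
lemma conj_basisHom (e : FullE 𝒬) (y : 𝓛 ⊕ Pts 𝒬 →₀ ℤ) :
    collapse 𝒬 ∘ₗ basisHom _ _ e y ∘ₗ subdiv h2 tf tr =
      (sf tf e * sr h2 tr e) • basisHom _ _ (proj h2 e) (collapse 𝒬 y) := by
  refine LinearMap.ext fun x => ?_
  simp only [LinearMap.comp_apply, LinearMap.smul_apply, basisHom_apply, map_smul, subdiv_apply]
  module

include horr1 horr2 in
lemma r_end (e : FullE 𝒬) :
    basisHom _ _ (proj h2 e) (Finsupp.single (Sum.inl e.1.2) 1) ∈ rel tr hr (eulRed 𝒬) :=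
  gs1 _ (proj_inc horr1 horr2 e)

lemma basisHom_add {V E : Type*} [Fintype V] [Fintype E] [DecidableEq V] [DecidableEq E] (e : E)
    (y z : V →₀ ℤ) : basisHom V E e (y + z) = basisHom V E e y + basisHom V E e z := by
  refine LinearMap.ext fun x => ?_
  simp

lemma basisHom_smul {V E : Type*} [Fintype V] [Fintype E] [DecidableEq V] [DecidableEq E] (e : E)
    (c : ℤ) (y : V →₀ ℤ) : basisHom V E e (c • y) = c • basisHom V E e y := by
  refine LinearMap.ext fun x => ?_
  rw [LinearMap.smul_apply, basisHom_apply, basisHom_apply, smul_comm]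

lemma inc_other {V E : Type*} [DecidableEq V] (t h : E → V) (e : E) (v : V) :
    Inc t h e (other V E t h e v) := by
  unfold Inc other
  grind

include horf horr1 horr2 in
/-- The relations of the full graph hold in the reduced one. -/
lemma full_to_red {f} (hfg : f ∈ gsGens (𝓛 ⊕ Pts 𝒬) (FullE 𝒬) tf hf) :
    collapse 𝒬 ∘ₗ f ∘ₗ subdiv h2 tf tr ∈ rel tr hr (eulRed 𝒬) := by
  refine gsGens_induct
    (p := fun f => collapse 𝒬 ∘ₗ f ∘ₗ subdiv h2 tf tr ∈ rel tr hr (eulRed 𝒬)) ?_ ?_ ?_ hfg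
  · intro c f hf
    rw [LinearMap.smul_comp, LinearMap.comp_smul]
    exact Submodule.smul_mem _ _ hf
  · rintro e (L | P) hv
    · obtain rfl := (f_inc_inl horf e L).1 hv
      rw [conj_basisHom, collapse_inl]
      exact Submodule.smul_mem _ _ (r_end horr1 horr2 e)
    · have : P = pt e := Subtype.ext ((f_inc_inr horf e P).1 hv).symm
      rw [this, conj_basisHom, collapse_pt (h2 := h2) horr1 horr2, basisHom_add, basisHom_smul]
      exact Submodule.smul_mem _ _ (Submodule.add_mem _ (gs1 _ (inc_other _ _ _ _))
        (Submodule.smul_mem _ _ (r_end horr1 horr2 e)))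
  · rintro e₁ e₂ (L | P) i₁ i₂ <;>
      rw [LinearMap.add_comp, LinearMap.comp_add, LinearMap.smul_comp, LinearMap.smul_comp,
        LinearMap.comp_smul, LinearMap.comp_smul, conj_basisHom, conj_basisHom]
    · have h₁ := (f_inc_inl horf e₁ L).1 i₁
      obtain rfl := (f_inc_inl horf e₂ L).1 i₂
      have j₁ := proj_inc (h2 := h2) horr1 horr2 e₁
      rw [h₁] at j₁
      have H := gs2 (eulRed 𝒬) j₁ (proj_inc (h2 := h2) horr1 horr2 e₂)
      have k₁ := r_end (h2 := h2) horr1 horr2 e₁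
      have k₂ := r_end (h2 := h2) horr1 horr2 e₂
      have ho : other _ _ tf hf e₁ (Sum.inl e₂.1.2) = Sum.inr (pt e₁) := by
        rw [← h₁]; exact f_other_inl horf e₁
      have hs : sgn _ _ tf e₁ (Sum.inl e₂.1.2) = sf tf e₁ := by rw [← h₁]
      have hs' : sgn _ _ tr (proj h2 e₁) (Sum.inl e₂.1.2) = sr h2 tr e₁ := by rw [← h₁]
      rw [ho, hs, f_other_inl horf, collapse_pt (h2 := h2) horr1 horr2,
        collapse_pt (h2 := h2) horr1 horr2, smul_smul, smul_smul, ← mul_assoc, ← mul_assoc,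
        sf_sq, sf_sq, one_mul, one_mul, basisHom_add, basisHom_smul, basisHom_add, basisHom_smul]
      rw [hs'] at H
      rw [h₁] at k₁ ⊢
      convert Submodule.add_mem _ H (Submodule.add_mem _
        (Submodule.smul_mem _ (sr h2 tr e₁ * dbl (proj h2 e₂)) k₁)
        (Submodule.smul_mem _ (sr h2 tr e₂ * dbl (proj h2 e₁)) k₂)) using 1
      module
    · have h₁ := (f_inc_inr horf e₁ P).1 i₁
      have h₂ := (f_inc_inr horf e₂ P).1 i₂
      rw [f_other_inr' horf h₁, f_other_inr' horf h₂, collapse_inl, collapse_inl]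
      by_cases hc : 3 ≤ P.1.card
      · have H := gs2 (eulRed 𝒬) (r_inc_big (h2 := h2) horr1 (P := ⟨P.1, P.2, hc⟩) h₁)
          (r_inc_big (h2 := h2) horr1 (P := ⟨P.1, P.2, hc⟩) h₂)
        rw [r_sgn_big horr1 (e := e₁) h₁, r_sgn_big horr1 (e := e₂) h₂,
          r_other_big horr1 (e := e₁) h₁, r_other_big horr1 (e := e₂) h₂] at H
        rw [f_sgn' horf h₁, f_sgn' horf h₂, smul_smul, smul_smul, neg_mul, neg_mul, ← mul_assoc,
          ← mul_assoc, sf_sq, sf_sq, one_mul, one_mul]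
        exact H
      -- At a double point each of the two terms is an instance of (GS1).
      · have hp : proj h2 e₁ = proj h2 e₂ := by
          simp [proj, h₁, h₂, hc]
        have k₁ := r_end (h2 := h2) horr1 horr2 e₁
        have k₂ := r_end (h2 := h2) horr1 horr2 e₂
        rw [← hp] at k₂
        rw [hp] at k₁
        exact Submodule.add_mem _
          (Submodule.smul_mem _ _ (Submodule.smul_mem _ _ k₂))
          (Submodule.smul_mem _ _ (Submodule.smul_mem _ _ k₁))

end Incidence

end GraphStabiliser

open GraphStabiliser in
/-- For a line combinatorics `(𝓛, 𝒬)`, the graph stabiliser of its reduced incidence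
graph (with Euler numbers `1 − b(L)` and `−1`, and any orientation `tr`/`hr` of its
edges) is isomorphic, as an abelian group, to the graph stabiliser of its full
incidence graph (with Euler numbers `1 − n(L)` and `−1`, and any orientation
`tf`/`hf` of its edges). -/
theorem graph_stabiliser_reduced_iso_full
    {𝓛 : Type*} [Fintype 𝓛] [DecidableEq 𝓛] (𝒬 : Finset (Finset 𝓛))
    (h2 : ∀ P ∈ 𝒬, 2 ≤ P.card)
    (huniq : ∀ L L' : 𝓛, L ≠ L' → ∃! P, P ∈ 𝒬 ∧ L ∈ P ∧ L' ∈ P)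
    -- an arbitrary orientation of the full incidence graph:
    (tf hf : FullE 𝒬 → 𝓛 ⊕ Pts 𝒬)
    (horf : ∀ e : FullE 𝒬,
      (tf e = Sum.inl e.1.2 ∧ hf e = Sum.inr ⟨e.1.1, e.2.1⟩) ∨
      (tf e = Sum.inr ⟨e.1.1, e.2.1⟩ ∧ hf e = Sum.inl e.1.2))
    -- an arbitrary orientation of the reduced incidence graph:
    (tr hr : RedE1 𝒬 ⊕ RedE2 𝒬 → 𝓛 ⊕ Pts2 𝒬)
    (horr1 : ∀ e : RedE1 𝒬,
      (tr (Sum.inl e) = Sum.inl e.1.2 ∧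
        hr (Sum.inl e) = Sum.inr ⟨e.1.1, e.2.1, e.2.2.1⟩) ∨
      (tr (Sum.inl e) = Sum.inr ⟨e.1.1, e.2.1, e.2.2.1⟩ ∧
        hr (Sum.inl e) = Sum.inl e.1.2))
    (horr2 : ∀ e : RedE2 𝒬, ∃ L L' : 𝓛, L ≠ L' ∧ e.1 = {L, L'} ∧
      tr (Sum.inr e) = Sum.inl L ∧ hr (Sum.inr e) = Sum.inl L') :
    Nonempty
      (Stab (𝓛 ⊕ Pts2 𝒬) (RedE1 𝒬 ⊕ RedE2 𝒬) tr hr (eulRed 𝒬) ≃+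
        Stab (𝓛 ⊕ Pts 𝒬) (FullE 𝒬) tf hf (eulFull 𝒬)) := by
  exact stab_equiv (subdiv h2 tf tr) (unsubdiv h2 tf tr) (embC0 𝒬) (collapse 𝒬)
    (fun x hx => (subdiv_mem_H1 horf horr1 horr2 x).2 hx)
    (unsubdiv_mem_H1 horf horr1 horr2)
    (emb_mhRel (h2 := h2) horf horr1 horr2)
    (collapse_mhRel (h2 := h2) horf horr1 horr2)
    (fun x _ => unsubdiv_subdiv x)
    (fun x hx => subdiv_unsubdiv horf horr2 hx)
    (fun y => by rw [collapse_emb, sub_self]; exact Submodule.zero_mem _)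
    (emb_collapse horf)
    (fun f hf' => red_to_full horf horr1 horr2 hf')
    (fun f hf' => full_to_red horf horr1 horr2 hf')
end

section
/- Let (𝓛, 𝒬) be a line combinatorics. Let M̂H be the quotient of the free abelian group on the set 𝓛 ⊔ 𝒬 by the subgroup generated by the elements (1 − n(L))·L + Σ_{P ∈ 𝒬, L ∈ P} P for every line L ∈ 𝓛, and (−1)·P + Σ_{L ∈ P} L for every P ∈ 𝒬, where n(L) is the number of P ∈ 𝒬 containing L. Then M̂H is isomorphic to the quotient of the free abelian group on 𝓛 by the subgroup generated by the single element Σ_{L ∈ 𝓛} L, via the homomorphism sending the class of each generator L ∈ 𝓛 to the class of L and the class of each generator P ∈ 𝒬 to the class of Σ_{L ∈ P} L. -/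
/-!
In `M̂H` the point relators say `P = Σ_{L' ∈ P} L'`, so `M̂H` is generated by the lines.
Substituting this into the relator of a line `L` gives
`(1 − n(L))·L + Σ_{P ∋ L} Σ_{L' ∈ P} L'`. Every `L' ≠ L` lies on exactly one point with `L`,
while `L` itself is counted `n(L)` times, so this element is `Σ_{L'} L'`, whatever `L` is
(`line_relation`). Hence substitution and the inclusion of the lines induce mutually inverse
homomorphisms. If `𝓛` is empty there is no line relator, but then `Σ_{L'} L' = 0`.
-/

namespace FullMeridianHomology

variable {𝓛 : Type*} [Fintype 𝓛] [DecidableEq 𝓛]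

/-- The points of the combinatorics, as a type. -/
abbrev Pts (𝒬 : Finset (Finset 𝓛)) : Type _ := {P : Finset 𝓛 // P ∈ 𝒬}

/-- The free abelian group on the vertex set `𝓛 ⊔ 𝒬` of the full incidence graph. -/
abbrev C0 (𝒬 : Finset (Finset 𝓛)) : Type _ := (𝓛 ⊕ Pts 𝒬) →₀ ℤ

/-- `n(L)`: the number of points of `𝒬` containing the line `L`. -/
def nL (𝒬 : Finset (Finset 𝓛)) (L : 𝓛) : ℕ := (𝒬.filter fun P => L ∈ P).card

/-- The relator attached to a line `L`: `(1 − n(L))·L + Σ_{P ∈ 𝒬, L ∈ P} P`. -/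
noncomputable def relLine (𝒬 : Finset (Finset 𝓛)) (L : 𝓛) : C0 𝒬 :=
  Finsupp.single (Sum.inl L) (1 - (nL 𝒬 L : ℤ)) +
    ∑ P ∈ Finset.univ.filter (fun P : Pts 𝒬 => L ∈ P.1), Finsupp.single (Sum.inr P) 1

/-- The relator attached to a point `P ∈ 𝒬`: `(−1)·P + Σ_{L ∈ P} L`. -/
noncomputable def relPoint (𝒬 : Finset (Finset 𝓛)) (P : Pts 𝒬) : C0 𝒬 :=
  Finsupp.single (Sum.inr P) (-1) + ∑ L ∈ P.1, Finsupp.single (Sum.inl L) 1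

/-- The meridian homology `M̂H` of the full incidence graph of the combinatorics:
the quotient of the free abelian group on `𝓛 ⊔ 𝒬` by the subgroup generated by the
relators. -/
abbrev MHfull (𝒬 : Finset (Finset 𝓛)) : Type _ :=
  C0 𝒬 ⧸ AddSubgroup.closure
    ({x | ∃ L : 𝓛, x = relLine 𝒬 L} ∪ {x | ∃ P : Pts 𝒬, x = relPoint 𝒬 P})

/-- The quotient of the free abelian group on `𝓛` by the subgroup generated by the
single element `Σ_{L ∈ 𝓛} L`. -/
abbrev MH' (𝓛 : Type*) [Fintype 𝓛] : Type _ :=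
  (𝓛 →₀ ℤ) ⧸ AddSubgroup.closure {∑ L : 𝓛, Finsupp.single L (1 : ℤ)}

end FullMeridianHomology

section Helpers

open FullMeridianHomology

/-- Counting incidences through `L`, with values in an arbitrary abelian group: the points
through `L` cover every other line exactly once, and cover `L` itself `n(L)` times. -/
theorem line_relation {𝓛 : Type*} [Fintype 𝓛] [DecidableEq 𝓛] {A : Type*} [AddCommGroup A]
    (𝒬 : Finset (Finset 𝓛))
    (huniq : ∀ L L' : 𝓛, L ≠ L' → ∃! P, P ∈ 𝒬 ∧ L ∈ P ∧ L' ∈ P) (x : 𝓛 → A) (L : 𝓛) :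
    (1 - (nL 𝒬 L : ℤ)) • x L +
      ∑ P ∈ Finset.univ.filter (fun P : Pts 𝒬 => L ∈ P.1), ∑ L' ∈ P.1, x L' =
    ∑ L' : 𝓛, x L' := by
  have h1 : ∑ P ∈ Finset.univ.filter (fun P : Pts 𝒬 => L ∈ P.1), ∑ L' ∈ P.1, x L' =
      ∑ P ∈ 𝒬.filter (fun P => L ∈ P), ∑ L' ∈ P, x L' := by
    rw [Finset.sum_filter, Finset.sum_filter]
    exact Finset.sum_coe_sort 𝒬 (fun P => if L ∈ P then ∑ L' ∈ P, x L' else 0)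
  have h2 : ∑ P ∈ 𝒬.filter (fun P => L ∈ P), ∑ L' ∈ P, x L' =
      ∑ L' : 𝓛, ∑ P ∈ 𝒬.filter (fun P => L ∈ P ∧ L' ∈ P), x L' := by
    refine Finset.sum_comm' ?_
    intro P L'
    simp [and_assoc]
  have h3 : ∀ L' : 𝓛, L' ∈ Finset.univ.erase L →
      ∑ P ∈ 𝒬.filter (fun P => L ∈ P ∧ L' ∈ P), x L' = x L' := by
    intro L' hL'
    obtain ⟨P, hP, hP'⟩ := huniq L L' (Finset.ne_of_mem_erase hL').symm
    have : 𝒬.filter (fun P => L ∈ P ∧ L' ∈ P) = {P} := by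
      ext R
      simp only [Finset.mem_filter, Finset.mem_singleton]
      exact ⟨fun h => hP' R h, fun h => h ▸ hP⟩
    rw [this, Finset.sum_singleton]
  rw [h1, h2, ← Finset.add_sum_erase _ _ (Finset.mem_univ L), Finset.sum_congr rfl h3,
    ← Finset.add_sum_erase _ x (Finset.mem_univ L)]
  simp only [and_self, Finset.sum_const, nL, sub_smul, one_smul, natCast_zsmul]
  abel

/-- The substitution `L ↦ L`, `P ↦ Σ_{L ∈ P} L` on free abelian groups. -/
noncomputable def substPoints {𝓛 : Type*}
    (𝒬 : Finset (Finset 𝓛)) : C0 𝒬 →+ (𝓛 →₀ ℤ) :=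
  (Finsupp.linearCombination ℤ (Sum.elim (fun L : 𝓛 => Finsupp.single L (1 : ℤ))
    (fun P : Pts 𝒬 => ∑ L ∈ P.1, Finsupp.single L (1 : ℤ)))).toAddMonoidHom

/-- The inclusion of the lines into the vertices, on free abelian groups. -/
noncomputable def inclLines {𝓛 : Type*}
    (𝒬 : Finset (Finset 𝓛)) : (𝓛 →₀ ℤ) →+ C0 𝒬 :=
  (Finsupp.linearCombination ℤ
    (fun L : 𝓛 => (Finsupp.single (Sum.inl L) (1 : ℤ) : C0 𝒬))).toAddMonoidHom

section

variable {𝓛 : Type*} (𝒬 : Finset (Finset 𝓛))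

theorem substPoints_inl (L : 𝓛) (n : ℤ) :
    substPoints 𝒬 (Finsupp.single (Sum.inl L) n) = n • Finsupp.single L 1 := by
  simp [substPoints]

theorem substPoints_inr (P : Pts 𝒬) (n : ℤ) :
    substPoints 𝒬 (Finsupp.single (Sum.inr P) n) = n • ∑ L ∈ P.1, Finsupp.single L 1 := by
  simp [substPoints]

theorem inclLines_single (L : 𝓛) :
    inclLines 𝒬 (Finsupp.single L 1) = Finsupp.single (Sum.inl L) 1 := by
  simp [inclLines]

theorem substPoints_relPoint (P : Pts 𝒬) : substPoints 𝒬 (relPoint 𝒬 P) = 0 := by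
  rw [relPoint, map_add, map_sum, substPoints_inr]
  simp only [substPoints_inl, one_smul, neg_smul, neg_add_cancel]

theorem substPoints_relLine [Fintype 𝓛] [DecidableEq 𝓛]
    (huniq : ∀ L L' : 𝓛, L ≠ L' → ∃! P, P ∈ 𝒬 ∧ L ∈ P ∧ L' ∈ P) (L : 𝓛) :
    substPoints 𝒬 (relLine 𝒬 L) = ∑ L' : 𝓛, Finsupp.single L' 1 := by
  rw [relLine, map_add, map_sum, substPoints_inl]
  simp only [substPoints_inr, one_smul]
  exact line_relation 𝒬 huniq (fun L' => Finsupp.single L' (1 : ℤ)) L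

/-- In `M̂H` the class of a point is the sum of the classes of its lines. -/
theorem mk_single_inr [DecidableEq 𝓛] (P : Pts 𝒬) :
    (QuotientAddGroup.mk (Finsupp.single (Sum.inr P) 1) : MHfull 𝒬) =
      QuotientAddGroup.mk (∑ L ∈ P.1, Finsupp.single (Sum.inl L) 1) := by
  rw [QuotientAddGroup.eq]
  have h : relPoint 𝒬 P ∈ AddSubgroup.closure
      ({x | ∃ L : 𝓛, x = relLine 𝒬 L} ∪ {x | ∃ P : Pts 𝒬, x = relPoint 𝒬 P}) :=
    AddSubgroup.subset_closure (Or.inr ⟨P, rfl⟩)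
  rwa [relPoint, Finsupp.single_neg] at h

/-- The sum of all lines vanishes in `M̂H`: it is the relator of any one line, rewritten in
terms of lines only. -/
theorem mk_sum_lines [Fintype 𝓛] [DecidableEq 𝓛]
    (huniq : ∀ L L' : 𝓛, L ≠ L' → ∃! P, P ∈ 𝒬 ∧ L ∈ P ∧ L' ∈ P) :
    (QuotientAddGroup.mk (∑ L : 𝓛, Finsupp.single (Sum.inl L) 1) : MHfull 𝒬) = 0 := by
  rcases isEmpty_or_nonempty 𝓛 with hE | ⟨⟨L⟩⟩
  · simp
  have h : (QuotientAddGroup.mk (relLine 𝒬 L) : MHfull 𝒬) = 0 :=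
    (QuotientAddGroup.eq_zero_iff _).2 (AddSubgroup.subset_closure (Or.inl ⟨L, rfl⟩))
  let π : C0 𝒬 →+ MHfull 𝒬 := QuotientAddGroup.mk' _
  have hP : ∀ P : Pts 𝒬, π (Finsupp.single (Sum.inr P) 1) =
      ∑ L ∈ P.1, π (Finsupp.single (Sum.inl L) 1) := by
    intro P
    rw [← map_sum]
    exact mk_single_inr 𝒬 P
  have hL : Finsupp.single (Sum.inl L) (1 - (nL 𝒬 L : ℤ)) =
      (1 - (nL 𝒬 L : ℤ)) • (Finsupp.single (Sum.inl L) 1 : C0 𝒬) := by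
    simp
  change π _ = 0
  change π _ = 0 at h
  rw [relLine, map_add, map_sum, hL, map_zsmul, Finset.sum_congr rfl (fun P _ => hP P),
    line_relation 𝒬 huniq (fun L' => π (Finsupp.single (Sum.inl L') 1)) L] at h
  rw [map_sum, h]

end

end Helpers

open FullMeridianHomology in
/-- The meridian homology of the full incidence graph of a line combinatorics is
isomorphic to the quotient of the free abelian group on the lines by `Σ_L L`, via the
homomorphism sending (the class of) a line generator `L` to the class of `L` and (the
class of) a point generator `P` to the class of `Σ_{L ∈ P} L`. -/
theorem full_meridian_homology_iso {𝓛 : Type*} [Fintype 𝓛] [DecidableEq 𝓛]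
    (𝒬 : Finset (Finset 𝓛))
    (h2 : ∀ P ∈ 𝒬, 2 ≤ P.card)
    (huniq : ∀ L L' : 𝓛, L ≠ L' → ∃! P, P ∈ 𝒬 ∧ L ∈ P ∧ L' ∈ P) :
    ∃ e : MHfull 𝒬 ≃+ MH' 𝓛,
      (∀ L : 𝓛, e (QuotientAddGroup.mk (Finsupp.single (Sum.inl L) 1)) =
        QuotientAddGroup.mk (Finsupp.single L 1)) ∧
      (∀ P : Pts 𝒬, e (QuotientAddGroup.mk (Finsupp.single (Sum.inr P) 1)) =
        QuotientAddGroup.mk (∑ L ∈ P.1, Finsupp.single L 1)) := by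
  let f : MHfull 𝒬 →+ MH' 𝓛 := QuotientAddGroup.map _ _ (substPoints 𝒬) (by
    rw [AddSubgroup.closure_le]
    rintro x (⟨L, rfl⟩ | ⟨P, rfl⟩)
    · rw [SetLike.mem_coe, AddSubgroup.mem_comap]
      rw [substPoints_relLine 𝒬 huniq]
      exact AddSubgroup.subset_closure rfl
    · rw [SetLike.mem_coe, AddSubgroup.mem_comap]
      rw [substPoints_relPoint]
      exact zero_mem _)
  let g : MH' 𝓛 →+ MHfull 𝒬 := QuotientAddGroup.map _ _ (inclLines 𝒬) (by
    rw [AddSubgroup.closure_le]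
    rintro x rfl
    rw [SetLike.mem_coe, AddSubgroup.mem_comap]
    rw [map_sum, ← QuotientAddGroup.eq_zero_iff]
    simp only [inclLines_single]
    exact mk_sum_lines 𝒬 huniq)
  have hfL : ∀ L : 𝓛, f (QuotientAddGroup.mk (Finsupp.single (Sum.inl L) 1)) =
      QuotientAddGroup.mk (Finsupp.single L 1) := by
    intro L
    change QuotientAddGroup.mk (substPoints 𝒬 _) = _
    rw [substPoints_inl, one_smul]
  have hfP : ∀ P : Pts 𝒬, f (QuotientAddGroup.mk (Finsupp.single (Sum.inr P) 1)) =
      QuotientAddGroup.mk (∑ L ∈ P.1, Finsupp.single L 1) := by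
    intro P
    change QuotientAddGroup.mk (substPoints 𝒬 _) = _
    rw [substPoints_inr, one_smul]
  have hgL : ∀ L : 𝓛, g (QuotientAddGroup.mk (Finsupp.single L 1)) =
      QuotientAddGroup.mk (Finsupp.single (Sum.inl L) 1) := by
    intro L
    change QuotientAddGroup.mk (inclLines 𝒬 _) = _
    rw [inclLines_single]
  have hgf : g.comp f = AddMonoidHom.id _ := by
    ext v
    rcases v with L | P
    · change g (f (QuotientAddGroup.mk (Finsupp.single (Sum.inl L) 1))) =
        QuotientAddGroup.mk (Finsupp.single (Sum.inl L) 1)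
      rw [hfL, hgL]
    · change g (f (QuotientAddGroup.mk (Finsupp.single (Sum.inr P) 1))) =
        QuotientAddGroup.mk (Finsupp.single (Sum.inr P) 1)
      rw [hfP, mk_single_inr]
      change QuotientAddGroup.mk (inclLines 𝒬 _) = _
      rw [map_sum]
      simp only [inclLines_single]
  have hfg : f.comp g = AddMonoidHom.id _ := by
    ext L
    change f (g (QuotientAddGroup.mk (Finsupp.single L 1))) =
      QuotientAddGroup.mk (Finsupp.single L 1)
    rw [hgL, hfL]
  exact ⟨AddMonoidHom.toAddEquiv f g hgf hfg, hfL, hfP⟩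
end
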